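/- arXiv:1001.1082 — 14 statements merged into one kernel-verified Lean document; each statement's English description precedes it below -/
import Mathlib

section
/- Let f : ℂ × ℂ → ℂ be analytic on all of ℂ². Suppose that the function (u,w) ↦ u²·f(1/u, w), defined for u ≠ 0, extends to a function analytic on all of ℂ², and that the function (x,v) ↦ f(x, 1/v), defined for v ≠ 0, extends to a function analytic on all of ℂ². Then there exist constants b₁, b₂, b₃ ∈ ℂ such that f(x,w) = b₁ + b₂·x + b₃·x² for all (x,w) ∈ ℂ². (This is the statement that the ∂/∂x-component of a holomorphic vector field on ℂP¹ × ℂP¹, expressed in the affine chart, is a polynomial of degree ≤ 2 in x not depending on w.) -/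
/-!
For fixed `x`, the entire function `w ↦ f (x, w)` has a finite limit at infinity, namely the value
at `v = 0` of the extension in the chart `v = 1 / w`; by Liouville it is constant, so `f` does not
depend on `w`.

For `g x = f (x, 0)`, the second-order difference quotient
`d₂ x = (g x - g 0 - g' 0 * x) / x ^ 2`, extended over `0` by its limit, is entire. In terms of
`u = 1 / x` it equals `u ^ 2 * g (1 / u) - u ^ 2 * g 0 - u * g' 0`, which has a finite limit as
`u → 0` by the hypothesis on the chart at infinity. By Liouville again `d₂` is constant, that is,
`g` is a polynomial of degree at most `2`.
-/

open Filter Topology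

/-- Liouville in the chart at infinity: an entire function `g` that agrees near infinity with
`H (1 / z)`, for `H` continuous at `0`, is constant. -/
lemma eq_of_eq_comp_inv {g H : ℂ → ℂ} (hg : Differentiable ℂ g) (hH : ContinuousAt H 0)
    (h : ∀ z : ℂ, z ≠ 0 → g z = H z⁻¹) (z : ℂ) : g z = H 0 := by
  refine hg.apply_eq_of_tendsto_cocompact z ?_
  rw [← Metric.cobounded_eq_cocompact]
  have hlim : Tendsto (fun z : ℂ => H z⁻¹) (Bornology.cobounded ℂ) (𝓝 (H 0)) :=
    hH.tendsto.comp tendsto_inv₀_cobounded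
  refine hlim.congr' ?_
  filter_upwards [Bornology.eventually_ne_cobounded (0 : ℂ)] with z hz
  exact (h z hz).symm

lemma differentiable_dslope {g : ℂ → ℂ} (hg : Differentiable ℂ g) (c : ℂ) :
    Differentiable ℂ (dslope g c) :=
  differentiableOn_univ.1
    ((Complex.differentiableOn_dslope univ_mem).2 hg.differentiableOn)

/-- An entire function with at most a double pole at infinity is a polynomial of degree at most
two. -/
lemma exists_quadratic {g H : ℂ → ℂ} (hg : Differentiable ℂ g) (hH : ContinuousAt H 0)
    (h : ∀ u : ℂ, u ≠ 0 → H u = u ^ 2 * g (1 / u)) :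
    ∃ b₁ b₂ b₃ : ℂ, ∀ x : ℂ, g x = b₁ + b₂ * x + b₃ * x ^ 2 := by
  set d₁ := dslope g 0 with hd₁
  set d₂ := dslope d₁ 0 with hd₂
  have e₁ (x : ℂ) : x * d₁ x = g x - g 0 := by
    simpa using sub_smul_dslope g 0 x
  have e₂ (x : ℂ) : x * d₂ x = d₁ x - d₁ 0 := by
    simpa using sub_smul_dslope d₁ 0 x
  have hconst := eq_of_eq_comp_inv (g := d₂) (H := fun u => H u - u ^ 2 * g 0 - u * d₁ 0)
    (differentiable_dslope (differentiable_dslope hg 0) 0) (by fun_prop) (by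
      intro x hx
      simp only [h x⁻¹ (inv_ne_zero hx), one_div, inv_inv]
      field_simp
      linear_combination x * e₂ x + e₁ x)
  refine ⟨g 0, d₁ 0, d₂ 0, fun x => ?_⟩
  have hx : d₂ x = d₂ 0 := (hconst x).trans (hconst 0).symm
  linear_combination x ^ 2 * hx - x * e₂ x - e₁ x

/-- The ∂/∂x-component of a holomorphic vector field on ℂP¹ × ℂP¹, expressed in the
affine chart, is a polynomial of degree ≤ 2 in `x` not depending on `w`. -/
theorem statement0 (f : ℂ × ℂ → ℂ)
    (hf : ∀ z : ℂ × ℂ, AnalyticAt ℂ f z)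
    (h1 : ∃ F : ℂ × ℂ → ℂ, (∀ z : ℂ × ℂ, AnalyticAt ℂ F z) ∧
      ∀ u w : ℂ, u ≠ 0 → F (u, w) = u ^ 2 * f (1 / u, w))
    (h2 : ∃ G : ℂ × ℂ → ℂ, (∀ z : ℂ × ℂ, AnalyticAt ℂ G z) ∧
      ∀ x v : ℂ, v ≠ 0 → G (x, v) = f (x, 1 / v)) :
    ∃ b₁ b₂ b₃ : ℂ, ∀ x w : ℂ, f (x, w) = b₁ + b₂ * x + b₃ * x ^ 2 := by
  obtain ⟨F, hF, hFf⟩ := h1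
  obtain ⟨G, hG, hGf⟩ := h2
  have hfd : Differentiable ℂ f := fun z => (hf z).differentiableAt
  have hFc : Continuous F := continuous_iff_continuousAt.2 fun z => (hF z).continuousAt
  have hGc : Continuous G := continuous_iff_continuousAt.2 fun z => (hG z).continuousAt
  have hw (x w : ℂ) : f (x, w) = G (x, 0) :=
    eq_of_eq_comp_inv (g := fun w => f (x, w)) (H := fun v => G (x, v)) (by fun_prop)
      (by fun_prop) (fun z hz => by simp [hGf x z⁻¹ (inv_ne_zero hz)]) w
  obtain ⟨b₁, b₂, b₃, hb⟩ := exists_quadratic (g := fun x => f (x, 0)) (H := fun u => F (u, 0))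
    (by fun_prop) (by fun_prop) (fun u hu => hFf u 0 hu)
  exact ⟨b₁, b₂, b₃, fun x w => by rw [hw x w, ← hw x 0, hb x]⟩
end

section
/- Let h : ℂ × ℂ → ℂ be analytic on all of ℂ². Suppose that the function (u,w) ↦ u²·h(1/u, w), defined for u ≠ 0, extends to a function analytic on all of ℂ², and that the function (x,v) ↦ v²·h(x, 1/v), defined for v ≠ 0, extends to a function analytic on all of ℂ². Then there exist constants a₁, …, a₉ ∈ ℂ such that h(x,w) = a₁ + a₂x + a₃x² + a₄w + a₅xw + a₆x²w + a₇w² + a₈xw² + a₉x²w² for all (x,w) ∈ ℂ²; in particular h is a polynomial of degree ≤ 2 in x and degree ≤ 2 in w. (This is the statement that the coefficient of a holomorphic bivector field on ℂP¹ × ℂP¹ in the affine chart lies in a 9-dimensional space.) -/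
/-!
Freeze one variable: `f = h(·, w)` is entire and `u² f(1/u)` has a limit as `u → 0`. Dividing out the
first two Taylor terms of `f` at `0` leaves an entire function `q` with a finite limit at infinity,
so `q` is constant by Liouville and `f` is a polynomial of degree at most `2`
(`exists_quadratic_of_reciprocal`). Such a polynomial is determined by its values at `0, 1, -1` through
Lagrange interpolation, with nodes independent of `w` (`lagrange_of_reciprocal`). Hence `h(x, w)`
is a fixed quadratic combination in `x` of `h(0, w)`, `h(1, w)`, `h(-1, w)`, and each of these is in
turn interpolated in `w`. The nine coefficients are therefore linear combinations of the nine values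
of `h` on `{0, 1, -1}²`.
-/

open Filter Topology in
/-- An entire function growing at most quadratically at infinity, in the sense that
`u² f(1/u)` extends continuously to `u = 0`, is a quadratic polynomial. -/
theorem exists_quadratic_of_reciprocal {f g : ℂ → ℂ} (hf : Differentiable ℂ f)
    (hg : ContinuousAt g 0) (hfg : ∀ u : ℂ, u ≠ 0 → g u = u ^ 2 * f (1 / u)) :
    ∃ a b c : ℂ, ∀ x, f x = a + b * x + c * x ^ 2 := by
  have entire_dslope : ∀ k : ℂ → ℂ, Differentiable ℂ k → Differentiable ℂ (dslope k 0) := by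
    intro k hk
    rw [← differentiableOn_univ] at hk ⊢
    exact (Complex.differentiableOn_dslope univ_mem).2 hk
  have taylor : ∀ x, f x = f 0 + dslope f 0 0 * x + dslope (dslope f 0) 0 x * x ^ 2 := by
    intro x
    have e1 := sub_smul_dslope f 0 x
    have e2 := sub_smul_dslope (dslope f 0) 0 x
    simp only [sub_zero, smul_eq_mul] at e1 e2
    linear_combination -e1 - x * e2
  have hlim : Tendsto (dslope (dslope f 0) 0) (cocompact ℂ) (𝓝 (g 0)) := by
    have hinv : Tendsto (fun x : ℂ => x⁻¹) (cocompact ℂ) (𝓝 0) := Filter.tendsto_inv₀_cobounded.mono_left (Metric.cobounded_eq_cocompact (α := ℂ)).ge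
    have hlim' : Tendsto (fun x : ℂ => g x⁻¹ - f 0 * x⁻¹ ^ 2 - dslope f 0 0 * x⁻¹)
        (cocompact ℂ) (𝓝 (g 0 - f 0 * 0 ^ 2 - dslope f 0 0 * 0)) :=
      ((hg.tendsto.comp hinv).sub ((hinv.pow 2).const_mul _)).sub (hinv.const_mul _)
    have hlim0 : g 0 - f 0 * 0 ^ 2 - dslope f 0 0 * 0 = g 0 := by ring
    rw [hlim0] at hlim'
    refine hlim'.congr' ?_
    have hne : ∀ᶠ x : ℂ in cocompact ℂ, x ≠ 0 :=
      (isCompact_singleton (x := (0 : ℂ))).compl_mem_cocompact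
    filter_upwards [hne] with x hx
    rw [hfg _ (inv_ne_zero hx), one_div, inv_inv, taylor x]
    field_simp
    ring
  refine ⟨f 0, dslope f 0 0, g 0, fun x => ?_⟩
  rw [taylor x, (entire_dslope _ (entire_dslope _ hf)).apply_eq_of_tendsto_cocompact x hlim]

/-- Quadratic interpolation at the nodes `0, 1, -1`. -/
theorem lagrange_of_reciprocal {f g : ℂ → ℂ} (hf : Differentiable ℂ f)
    (hg : ContinuousAt g 0) (hfg : ∀ u : ℂ, u ≠ 0 → g u = u ^ 2 * f (1 / u)) (x : ℂ) :
    f x = f 0 + (f 1 - f (-1)) / 2 * x + ((f 1 + f (-1)) / 2 - f 0) * x ^ 2 := by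
  obtain ⟨a, b, c, habc⟩ := exists_quadratic_of_reciprocal hf hg hfg
  simp only [habc]
  ring

/-- The coefficient of a holomorphic bivector field on ℂP¹ × ℂP¹, expressed in the affine
chart, is a polynomial of degree ≤ 2 in `x` and degree ≤ 2 in `w`. -/
theorem statement1 (h : ℂ × ℂ → ℂ)
    (hh : ∀ z : ℂ × ℂ, AnalyticAt ℂ h z)
    (h1 : ∃ F : ℂ × ℂ → ℂ, (∀ z : ℂ × ℂ, AnalyticAt ℂ F z) ∧
      ∀ u w : ℂ, u ≠ 0 → F (u, w) = u ^ 2 * h (1 / u, w))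
    (h2 : ∃ G : ℂ × ℂ → ℂ, (∀ z : ℂ × ℂ, AnalyticAt ℂ G z) ∧
      ∀ x v : ℂ, v ≠ 0 → G (x, v) = v ^ 2 * h (x, 1 / v)) :
    ∃ a₁ a₂ a₃ a₄ a₅ a₆ a₇ a₈ a₉ : ℂ, ∀ x w : ℂ,
      h (x, w) = a₁ + a₂ * x + a₃ * x ^ 2 + a₄ * w + a₅ * (x * w) + a₆ * (x ^ 2 * w)
        + a₇ * w ^ 2 + a₈ * (x * w ^ 2) + a₉ * (x ^ 2 * w ^ 2) := by
  obtain ⟨F, hF, hFh⟩ := h1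
  obtain ⟨G, hG, hGh⟩ := h2
  have hx : ∀ x w : ℂ, h (x, w) = h (0, w) + (h (1, w) - h (-1, w)) / 2 * x
      + ((h (1, w) + h (-1, w)) / 2 - h (0, w)) * x ^ 2 := fun x w =>
    lagrange_of_reciprocal (f := fun x => h (x, w)) (g := fun u => F (u, w))
      (fun y => (hh (y, w)).differentiableAt.comp y (by fun_prop))
      ((hF (0, w)).continuousAt.comp (f := fun u : ℂ => (u, w)) (by fun_prop))
      (fun u hu => hFh u w hu) x
  have hw : ∀ x w : ℂ, h (x, w) = h (x, 0) + (h (x, 1) - h (x, -1)) / 2 * w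
      + ((h (x, 1) + h (x, -1)) / 2 - h (x, 0)) * w ^ 2 := fun x w =>
    lagrange_of_reciprocal (f := fun w => h (x, w)) (g := fun v => G (x, v))
      (fun y => (hh (x, y)).differentiableAt.comp y (by fun_prop))
      ((hG (x, 0)).continuousAt.comp (f := fun v : ℂ => (x, v)) (by fun_prop))
      (fun v hv => hGh x v hv) w
  -- `A i`, `B i`, `C i` are the coefficients of `1`, `w`, `w²` in `h (i, w)`.
  let A : ℂ → ℂ := fun i => h (i, 0)
  let B : ℂ → ℂ := fun i => (h (i, 1) - h (i, -1)) / 2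
  let C : ℂ → ℂ := fun i => (h (i, 1) + h (i, -1)) / 2 - h (i, 0)
  refine ⟨A 0, (A 1 - A (-1)) / 2, (A 1 + A (-1)) / 2 - A 0,
    B 0, (B 1 - B (-1)) / 2, (B 1 + B (-1)) / 2 - B 0,
    C 0, (C 1 - C (-1)) / 2, (C 1 + C (-1)) / 2 - C 0, fun x w => ?_⟩
  rw [hx x w, hw 0 w, hw 1 w, hw (-1) w]
  simp only [A, B, C]
  ring
end

section
/- Let h : ℂ × ℂ → ℂ be analytic on all of ℂ². Suppose that the function (u,v) ↦ u³·h(1/u, v/u), defined for u ≠ 0, extends to a function analytic on all of ℂ², and that the function (s,t) ↦ s³·h(t/s, 1/s), defined for s ≠ 0, extends to a function analytic on all of ℂ². Then h is a polynomial in x and w of total degree ≤ 3; i.e. there exist a₁, …, a₁₀ ∈ ℂ with h(x,w) = a₁ + a₂x + a₃w + a₄x² + a₅xw + a₆w² + a₇x³ + a₈x²w + a₉xw² + a₁₀w³. (This is the statement that holomorphic bivector fields on ℂP², expressed in the affine chart U₀, form the 10-dimensional space of cubic polynomials.) -/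
/-!
Fix `z ≠ 0` in `ℂ²` and restrict `h` to the complex line through `0` and `z`. In one of the two charts at
infinity this line approaches a single point of the line at infinity, where the extended function is
continuous; hence the entire function `l ↦ h (l z)` is `O(|l|³)` (`isBigO_line`). By Cauchy's
estimates its Taylor coefficients of order `n ≥ 4` vanish (`iteratedDeriv_eq_zero_of_isBigO`).
Evaluating the Taylor series at `l = 1` gives `h z = ∑_{n ≤ 3} Dⁿh(0)(z, …, z) / n!`, and each term
is a homogeneous polynomial of degree `n` in the coordinates of `z`, because `Dⁿh(0)` is multilinear
(`exists_homogeneous`).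
-/

open Filter Topology Asymptotics Bornology in
/-- An entire function that is `O(|l|³)` at infinity has no Taylor coefficients of order above
`3`, by Cauchy's estimate on circles of radius `R → ∞`. -/
lemma iteratedDeriv_eq_zero_of_isBigO {g : ℂ → ℂ} (hg : Differentiable ℂ g)
    (hO : g =O[cobounded ℂ] fun l => l ^ 3) {n : ℕ} (hn : 4 ≤ n) :
    iteratedDeriv n g 0 = 0 := by
  obtain ⟨C, hC⟩ := hO.bound
  rw [← comap_norm_atTop, eventually_comap] at hC
  have key : ∀ᶠ R : ℝ in atTop,
      ‖iteratedDeriv n g 0‖ ≤ (n.factorial * C) * (R ^ (n - 3))⁻¹ := by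
    filter_upwards [hC, eventually_gt_atTop 0] with R hR hR0
    have := Complex.norm_iteratedDeriv_le_of_forall_mem_sphere_norm_le (c := 0) (C := C * R ^ 3)
      n hR0 hg.diffContOnCl (fun l hl => by
        have hl' : ‖l‖ = R := by simpa using hl
        simpa [hl'] using hR l hl')
    refine this.trans (le_of_eq ?_)
    obtain ⟨m, rfl⟩ := Nat.exists_eq_add_of_le hn
    rw [show 4 + m - 3 = m + 1 by omega]
    field_simp
    ring
  have lim : Tendsto (fun R : ℝ => (n.factorial * C) * (R ^ (n - 3))⁻¹) atTop (𝓝 0) := by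
    simpa using (tendsto_inv_atTop_zero.comp
      (tendsto_pow_atTop (α := ℝ) (n := n - 3) (by omega))).const_mul (n.factorial * C)
  exact norm_le_zero_iff.1 (ge_of_tendsto lim key)

open Filter Topology Asymptotics Bornology in
/-- Growth of `h` along the line through `z ≠ 0`: the chart `U₁` handles the lines meeting infinity
at a point with nonzero first coordinate, the chart `U₂` the remaining line. -/
lemma isBigO_line (h F G : ℂ × ℂ → ℂ) (hF : Continuous F) (hG : Continuous G)
    (h1 : ∀ u v : ℂ, u ≠ 0 → F (u, v) = u ^ 3 * h (1 / u, v / u))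
    (h2 : ∀ s t : ℂ, s ≠ 0 → G (s, t) = s ^ 3 * h (t / s, 1 / s)) (x w : ℂ)
    (hz : x ≠ 0 ∨ w ≠ 0) :
    (fun l : ℂ => h (l * x, l * w)) =O[cobounded ℂ] fun l => l ^ 3 := by
  have inv (a : ℂ) : Tendsto (fun l : ℂ => l⁻¹ * a⁻¹) (cobounded ℂ) (𝓝 0) := by
    simpa using (tendsto_inv₀_cobounded (α := ℂ)).mul_const a⁻¹
  have ne : ∀ᶠ l : ℂ in cobounded ℂ, l ≠ 0 := eventually_ne_cobounded 0
  by_cases hx : x = 0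
  · have hw : w ≠ 0 := by tauto
    have lim : Tendsto (fun l : ℂ => w ^ 3 * G (l⁻¹ * w⁻¹, x / w)) (cobounded ℂ)
        (𝓝 (w ^ 3 * G (0, x / w))) :=
      ((hG.tendsto _).comp ((inv w).prodMk_nhds tendsto_const_nhds)).const_mul _
    refine (((isBigO_refl (fun l : ℂ => l ^ 3) _).mul (lim.isBigO_one ℂ)).congr' ?_ ?_)
    · filter_upwards [ne] with l hl
      rw [h2 _ _ (by positivity)]
      rw [show x / w / (l⁻¹ * w⁻¹) = l * x by field_simp,
        show 1 / (l⁻¹ * w⁻¹) = l * w by field_simp]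
      field_simp
    · simp
  · have lim : Tendsto (fun l : ℂ => x ^ 3 * F (l⁻¹ * x⁻¹, w / x)) (cobounded ℂ)
        (𝓝 (x ^ 3 * F (0, w / x))) :=
      ((hF.tendsto _).comp ((inv x).prodMk_nhds tendsto_const_nhds)).const_mul _
    refine (((isBigO_refl (fun l : ℂ => l ^ 3) _).mul (lim.isBigO_one ℂ)).congr' ?_ ?_)
    · filter_upwards [ne] with l hl
      rw [h1 _ _ (by positivity)]
      rw [show w / x / (l⁻¹ * x⁻¹) = l * w by field_simp,
        show 1 / (l⁻¹ * x⁻¹) = l * x by field_simp]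
      field_simp
    · simp

/-- A multilinear form on `ℂ²` restricted to the diagonal is a homogeneous polynomial. The
coefficient of `x ^ k * w ^ (n - k)` is the sum of the values of the form over all placements of
`k` copies of `(1, 0)` and `n - k` copies of `(0, 1)`. -/
lemma exists_homogeneous {n : ℕ} (f : ContinuousMultilinearMap ℂ (fun _ : Fin n => ℂ × ℂ) ℂ) :
    ∃ c : ℕ → ℂ, ∀ x w : ℂ,
      f (fun _ => (x, w)) = ∑ k ∈ Finset.range (n + 1), c k * (x ^ k * w ^ (n - k)) := by
  classical
  refine ⟨fun k => ∑ s ∈ Finset.powersetCard k (Finset.univ : Finset (Fin n)),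
    f (s.piecewise (fun _ => ((1 : ℂ), (0 : ℂ))) (fun _ => (0, 1))), fun x w => ?_⟩
  have e : (fun _ : Fin n => (x, w)) = (fun _ => (x, 0)) + fun _ => (0, w) := by
    ext <;> simp
  rw [e, f.map_add_univ, ← Finset.powerset_univ, Finset.sum_powerset, Finset.card_univ,
    Fintype.card_fin]
  refine Finset.sum_congr rfl fun k _ => ?_
  rw [Finset.sum_mul]
  refine Finset.sum_congr rfl fun s hs => ?_
  have hs' : s.card = k := (Finset.mem_powersetCard.1 hs).2
  have e2 : s.piecewise (fun _ : Fin n => (x, (0 : ℂ))) (fun _ => ((0 : ℂ), w)) =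
      fun i => (s.piecewise (fun _ => x) (fun _ => w) i) •
        s.piecewise (fun _ => ((1 : ℂ), (0 : ℂ))) (fun _ => (0, 1)) i := by
    funext i
    by_cases hi : i ∈ s <;> simp [hi]
  rw [e2, f.map_smul_univ, Finset.prod_piecewise]
  have hc : (Finset.univ \ s).card = n - k := by
    rw [← Finset.compl_eq_univ_sdiff, Finset.card_compl, Fintype.card_fin, hs']
  simp [hs', hc, mul_comm]

/-- Holomorphic bivector fields on ℂP², expressed in the affine chart U₀, are the cubic
polynomials in `x`, `w`. -/
theorem statement2 (h : ℂ × ℂ → ℂ)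
    (hh : ∀ z : ℂ × ℂ, AnalyticAt ℂ h z)
    (h1 : ∃ F : ℂ × ℂ → ℂ, (∀ z : ℂ × ℂ, AnalyticAt ℂ F z) ∧
      ∀ u v : ℂ, u ≠ 0 → F (u, v) = u ^ 3 * h (1 / u, v / u))
    (h2 : ∃ G : ℂ × ℂ → ℂ, (∀ z : ℂ × ℂ, AnalyticAt ℂ G z) ∧
      ∀ s t : ℂ, s ≠ 0 → G (s, t) = s ^ 3 * h (t / s, 1 / s)) :
    ∃ a₁ a₂ a₃ a₄ a₅ a₆ a₇ a₈ a₉ a₁₀ : ℂ, ∀ x w : ℂ,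
      h (x, w) = a₁ + a₂ * x + a₃ * w + a₄ * x ^ 2 + a₅ * (x * w) + a₆ * w ^ 2
        + a₇ * x ^ 3 + a₈ * (x ^ 2 * w) + a₉ * (x * w ^ 2) + a₁₀ * w ^ 3 := by
  obtain ⟨F, hF, h1⟩ := h1
  obtain ⟨G, hG, h2⟩ := h2
  have hFc : Continuous F := continuous_iff_continuousAt.2 fun z => (hF z).continuousAt
  have hGc : Continuous G := continuous_iff_continuousAt.2 fun z => (hG z).continuousAt
  have hsm : ContDiff ℂ ⊤ h := contDiff_iff_contDiffAt.2 fun z => (hh z).contDiffAt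
  have taylor : ∀ x w : ℂ, h (x, w) = ∑ n ∈ Finset.range 4,
      ((n.factorial : ℂ)⁻¹) * iteratedFDeriv ℂ n h 0 (fun _ => (x, w)) := by
    intro x w
    let L : ℂ →L[ℂ] ℂ × ℂ := ContinuousLinearMap.toSpanSingleton ℂ (x, w)
    have hL : ∀ l, (h ∘ L) l = h (l * x, l * w) := fun l => by
      simp [L, ContinuousLinearMap.toSpanSingleton_apply]
    have hd : ∀ n, iteratedDeriv n (h ∘ L) 0 = iteratedFDeriv ℂ n h 0 (fun _ => (x, w)) := by
      intro n
      rw [iteratedDeriv_eq_iteratedFDeriv,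
        L.iteratedFDeriv_comp_right hsm 0 (i := n) (by exact_mod_cast le_top)]
      simp [L, ContinuousLinearMap.toSpanSingleton_apply]
    have hdiff : Differentiable ℂ (h ∘ L) :=
      (hsm.differentiable (by simp)).comp L.differentiable
    have hO : (h ∘ L) =O[Bornology.cobounded ℂ] fun l => l ^ 3 := by
      rw [show h ∘ L = fun l : ℂ => h (l * x, l * w) from funext hL]
      by_cases hz : x ≠ 0 ∨ w ≠ 0
      · exact isBigO_line h F G hFc hGc h1 h2 x w hz
      -- For `(x, w) = 0` the restriction is constant.
      · push Not at hz
        obtain ⟨rfl, rfl⟩ := hz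
        refine Asymptotics.IsBigO.of_bound ‖h (0, 0)‖ ?_
        rw [← comap_norm_atTop, Filter.eventually_comap]
        filter_upwards [Filter.eventually_ge_atTop 1] with R hR l hl
        have h3 : 1 ≤ ‖l‖ ^ 3 := one_le_pow₀ (hl ▸ hR)
        simpa using le_mul_of_one_le_right (norm_nonneg (h (0, 0))) h3
    have hs := Complex.hasSum_taylorSeries_of_entire hdiff 0 1
    have hs' := hasSum_sum_of_ne_finset_zero (L := .unconditional ℕ) (s := Finset.range 4)
      (f := fun n : ℕ => ((n.factorial : ℂ)⁻¹ • (1 - 0 : ℂ) ^ n • iteratedDeriv n (h ∘ L) 0))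
      (fun n hn => by
        have hn4 : 4 ≤ n := by simpa using hn
        simp [iteratedDeriv_eq_zero_of_isBigO hdiff hO hn4])
    have := hs.unique hs'
    rw [hL 1] at this
    simpa [hd] using this
  choose c hc using fun n => exists_homogeneous (iteratedFDeriv ℂ n h 0)
  refine ⟨c 0 0, c 1 1, c 1 0, c 2 2 / 2, c 2 1 / 2, c 2 0 / 2,
    c 3 3 / 6, c 3 2 / 6, c 3 1 / 6, c 3 0 / 6, fun x w => ?_⟩
  rw [taylor]
  simp only [hc]
  simp [Finset.sum_range_succ, Nat.factorial]
  ring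
end

section
/- Let v₁, …, v₈ ∈ ℂ³ be nonzero vectors that are pairwise linearly independent (so they represent eight distinct points of the complex projective plane). If the ℂ-linear map from the space of homogeneous polynomials of degree 3 in three variables over ℂ to ℂ⁸ given by F ↦ (F(v₁), …, F(v₈)) is NOT surjective, then either there exists a nonzero homogeneous polynomial Q of degree 2 in three variables with Q(vᵢ) = 0 for all i = 1, …, 8 (all eight points lie on a conic), or there exist five indices i₁ < … < i₅ in {1,…,8} and a nonzero homogeneous polynomial L of degree 1 with L(v_{i_j}) = 0 for j = 1, …, 5 (five of the points are colinear). -/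
/-!
If evaluation of cubics at the eight points is not onto, some nonzero linear functional on `ℂ⁸`
kills its image: there are weights `w`, not all zero, with `∑ i, w i * F (v i) = 0` for every
cubic `F` (`exists_weights`).

*At least five weights are nonzero* (`five_le_card_support`). Otherwise fix a point `v p` with
`w p ≠ 0` and multiply together, for each of the at most three other points of nonzero weight, a
line through that point missing `v p`; padding with a coordinate not vanishing at `v p` gives a
cubic which violates the relation.

*A rank count.* Applying the relation to the products `X j * q`, with `q` a quadratic monomial,
says that `N * M = 0`, where `N` is the `3 × 8` matrix `w i * v i j` and `M` is the `8 × 6` matrix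
of values of the quadratic monomials at the points. Hence `rank N + rank M ≤ 8`, so `N` and `M`
cannot have full ranks `3` and `6`. If `rank M < 6`, a nonzero quadratic form vanishes at all eight
points. If `rank N < 3`, a nonzero linear form vanishes at every point of nonzero weight, and there
are at least five of those.
-/

open MvPolynomial

theorem exists_weights (v : Fin 8 → (Fin 3 → ℂ))
    (h : ¬ ∀ y : Fin 8 → ℂ, ∃ F : MvPolynomial (Fin 3) ℂ,
      F.IsHomogeneous 3 ∧ ∀ i, eval (v i) F = y i) :
    ∃ w : Fin 8 → ℂ, w ≠ 0 ∧ ∀ F : MvPolynomial (Fin 3) ℂ, F.IsHomogeneous 3 →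
      ∑ i, w i * eval (v i) F = 0 := by
  set E : MvPolynomial (Fin 3) ℂ →ₗ[ℂ] (Fin 8 → ℂ) :=
    LinearMap.pi fun i => (aeval (v i)).toLinearMap with hE
  have hlt : (homogeneousSubmodule (Fin 3) ℂ 3).map E < ⊤ := by
    rw [lt_top_iff_ne_top]
    intro htop
    refine h fun y => ?_
    have hy : y ∈ (homogeneousSubmodule (Fin 3) ℂ 3).map E := htop ▸ Submodule.mem_top
    obtain ⟨F, hF, hFy⟩ := hy
    refine ⟨F, hF, fun i => ?_⟩
    have := congrFun hFy i
    simpa [hE, aeval_eq_eval] using this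
  obtain ⟨f, hf0, hf⟩ := Submodule.exists_le_ker_of_lt_top _ hlt
  have hfs : ∀ y, f y = ∑ i, f (Pi.single i 1) * y i := by
    intro y
    rw [LinearMap.pi_apply_eq_sum_univ f y]
    refine Finset.sum_congr rfl fun i _ => ?_
    rw [smul_eq_mul, mul_comm]
    congr 2
    ext j
    simp [Pi.single_apply, eq_comm]
  refine ⟨fun i => f (Pi.single i 1), fun h0 => hf0 ?_, fun F hF => ?_⟩
  · ext y
    simp [congrFun h0]
  · have := hf (Submodule.mem_map_of_mem (f := E) hF)
    rw [LinearMap.mem_ker, hfs] at this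
    simpa [hE, aeval_eq_eval] using this

/-- The line is found among the forms `q j * X i - q i * X j`, whose values at `p` are the
coordinates of the cross product of `p` and `q`. -/
theorem exists_line_through_missing (p q : Fin 3 → ℂ) (hq : q ≠ 0)
    (h : LinearIndependent ℂ ![p, q]) :
    ∃ L : MvPolynomial (Fin 3) ℂ, L.IsHomogeneous 1 ∧ eval q L = 0 ∧ eval p L ≠ 0 := by
  by_contra! hcon
  have hcross : ∀ i j, q j * p i - q i * p j = 0 := by
    intro i j
    have := hcon (C (q j) * X i - C (q i) * X j)
      ((isHomogeneous_C_mul_X _ _).sub (isHomogeneous_C_mul_X _ _)) (by simp [mul_comm])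
    simpa using this
  obtain ⟨k, hk⟩ := Function.ne_iff.mp hq
  refine hk (LinearIndependent.pair_iff.mp h (q k) (-p k) ?_).1
  ext i
  simp only [Pi.add_apply, Pi.smul_apply, smul_eq_mul, Pi.zero_apply]
  linear_combination hcross i k

theorem five_le_card_support (v : Fin 8 → (Fin 3 → ℂ)) (hv0 : ∀ i, v i ≠ 0)
    (hvind : ∀ i j, i ≠ j → LinearIndependent ℂ ![v i, v j])
    (w : Fin 8 → ℂ) (hw : w ≠ 0)
    (hrel : ∀ F : MvPolynomial (Fin 3) ℂ, F.IsHomogeneous 3 → ∑ i, w i * eval (v i) F = 0) :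
    5 ≤ (Finset.univ.filter fun i => w i ≠ 0).card := by
  by_contra! hlt
  obtain ⟨p, hp⟩ := Function.ne_iff.mp hw
  set T := (Finset.univ.filter fun i => w i ≠ 0).erase p with hT
  have hTcard : T.card ≤ 3 := by
    rw [hT, Finset.card_erase_of_mem (by simpa using hp)]
    omega
  have hline : ∀ i, ∃ L : MvPolynomial (Fin 3) ℂ,
      L.IsHomogeneous 1 ∧ (i ≠ p → eval (v i) L = 0) ∧ eval (v p) L ≠ 0 := by
    intro i
    by_cases hi : i = p
    · obtain ⟨k, hk⟩ := Function.ne_iff.mp (hv0 p)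
      exact ⟨X k, isHomogeneous_X _ _, fun h => absurd hi h, by simpa using hk⟩
    · obtain ⟨L, h1, h2, h3⟩ := exists_line_through_missing (v p) (v i) (hv0 i)
        (hvind p i (Ne.symm hi))
      exact ⟨L, h1, fun _ => h2, h3⟩
  choose L hL1 hL2 hL3 using hline
  -- `L p` does not vanish at `v p` and serves to bring the degree up to three.
  have hF : ((∏ i ∈ T, L i) * L p ^ (3 - T.card)).IsHomogeneous 3 := by
    have h := (IsHomogeneous.prod T L (fun _ => 1) fun i _ => hL1 i).mul
      ((hL1 p).pow (3 - T.card))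
    convert h using 1
    simp
    omega
  have hsum := hrel _ hF
  rw [Finset.sum_eq_single p] at hsum
  · rcases mul_eq_zero.mp hsum with h | h
    · exact hp h
    · rw [map_mul, map_prod, map_pow] at h
      rcases mul_eq_zero.mp h with h | h
      · obtain ⟨i, -, hi⟩ := Finset.prod_eq_zero_iff.mp h
        exact hL3 i hi
      · exact hL3 p (eq_zero_of_pow_eq_zero h)
  · intro i _ hip
    by_cases hwi : w i = 0
    · simp [hwi]
    · have hiT : i ∈ T := by simp [hT, hip, hwi]
      rw [map_mul, map_prod, Finset.prod_eq_zero hiT (hL2 i hip)]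
      simp
  · simp

/-- The six monomials of degree two in three variables. -/
noncomputable def quadMonomial : Fin 6 → MvPolynomial (Fin 3) ℂ :=
  ![X 0 * X 0, X 1 * X 1, X 2 * X 2, X 0 * X 1, X 0 * X 2, X 1 * X 2]

theorem quadMonomial_isHomogeneous (k : Fin 6) : (quadMonomial k).IsHomogeneous 2 := by
  fin_cases k <;> exact (isHomogeneous_X _ _).mul (isHomogeneous_X _ _)

theorem quadForm_ne_zero {c : Fin 6 → ℂ} (hc : c ≠ 0) : ∑ k, C (c k) * quadMonomial k ≠ 0 := by
  intro h
  refine hc ?_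
  have hev : ∀ x : Fin 3 → ℂ, c 0 * (x 0 * x 0) + c 1 * (x 1 * x 1) + c 2 * (x 2 * x 2)
      + c 3 * (x 0 * x 1) + c 4 * (x 0 * x 2) + c 5 * (x 1 * x 2) = 0 := by
    intro x
    have := congrArg (eval x) h
    simpa [Fin.sum_univ_six, quadMonomial] using this
  -- Values at the basis vectors and at their pairwise sums recover the coefficients.
  have h0 : c 0 = 0 := by simpa using hev ![1, 0, 0]
  have h1 : c 1 = 0 := by simpa using hev ![0, 1, 0]
  have h2 : c 2 = 0 := by simpa using hev ![0, 0, 1]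
  have h3 : c 3 = 0 := by simpa [h0, h1] using hev ![1, 1, 0]
  have h4 : c 4 = 0 := by simpa [h0, h2] using hev ![1, 0, 1]
  have h5 : c 5 = 0 := by simpa [h1, h2] using hev ![0, 1, 1]
  ext k
  fin_cases k <;> assumption

theorem linForm_ne_zero {a : Fin 3 → ℂ} (ha : a ≠ 0) :
    ∑ j, C (a j) * (X j : MvPolynomial (Fin 3) ℂ) ≠ 0 := by
  intro h
  refine ha (funext fun k => ?_)
  simpa [Pi.single_apply] using congrArg (eval (Pi.single k 1)) h

theorem rank_eq_of_mulVec_ne_zero {m n : ℕ} (A : Matrix (Fin m) (Fin n) ℂ)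
    (h : ∀ c, c ≠ 0 → A.mulVec c ≠ 0) : A.rank = n := by
  have hinj : Function.Injective A.mulVecLin := by
    rw [← LinearMap.ker_eq_bot, LinearMap.ker_eq_bot']
    intro c hc
    by_contra hne
    exact h c hne hc
  rw [Matrix.rank, LinearMap.finrank_range_of_inj hinj]
  simp

/-- Eight distinct points of ℂP² fail to impose independent conditions on cubics only
when all eight lie on a conic or five of them are colinear. -/
theorem statement4 (v : Fin 8 → (Fin 3 → ℂ))
    (hv0 : ∀ i, v i ≠ 0)
    (hvind : ∀ i j, i ≠ j → LinearIndependent ℂ ![v i, v j])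
    (hnotsurj : ¬ ∀ y : Fin 8 → ℂ, ∃ F : MvPolynomial (Fin 3) ℂ,
      F.IsHomogeneous 3 ∧ ∀ i, eval (v i) F = y i) :
    (∃ Q : MvPolynomial (Fin 3) ℂ, Q ≠ 0 ∧ Q.IsHomogeneous 2 ∧ ∀ i, eval (v i) Q = 0) ∨
    (∃ s : Finset (Fin 8), s.card = 5 ∧
      ∃ L : MvPolynomial (Fin 3) ℂ, L ≠ 0 ∧ L.IsHomogeneous 1 ∧ ∀ i ∈ s, eval (v i) L = 0) := by
  obtain ⟨w, hw, hrel⟩ := exists_weights v hnotsurj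
  have hcard := five_le_card_support v hv0 hvind w hw hrel
  set M : Matrix (Fin 8) (Fin 6) ℂ := Matrix.of fun i k => eval (v i) (quadMonomial k) with hM
  set N : Matrix (Fin 3) (Fin 8) ℂ := Matrix.of fun j i => w i * v i j with hN
  have hNM : N * M = 0 := by
    ext j k
    have := hrel (X j * quadMonomial k)
      ((isHomogeneous_X _ _).mul (quadMonomial_isHomogeneous k))
    simpa [hM, hN, Matrix.mul_apply, mul_assoc] using this
  have hrank := Matrix.rank_add_rank_le_card_of_mul_eq_zero hNM
  by_contra! hcon
  obtain ⟨hconic, hlines⟩ := hcon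
  have hMrank : M.rank = 6 := by
    refine rank_eq_of_mulVec_ne_zero M fun c hc hMc => ?_
    obtain ⟨i, hi⟩ := hconic (∑ k, C (c k) * quadMonomial k) (quadForm_ne_zero hc)
      (IsHomogeneous.sum _ _ _ fun k _ => (quadMonomial_isHomogeneous k).C_mul _)
    refine hi ?_
    have := congrFun hMc i
    simpa [hM, Matrix.mulVec, dotProduct, mul_comm] using this
  have hNrank : N.transpose.rank = 3 := by
    refine rank_eq_of_mulVec_ne_zero _ fun a ha hNa => ?_
    obtain ⟨s, hs, hs5⟩ := Finset.exists_subset_card_eq hcard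
    obtain ⟨i, his, hi⟩ := hlines s hs5 (∑ j, C (a j) * X j) (linForm_ne_zero ha)
      (IsHomogeneous.sum _ _ _ fun j _ => isHomogeneous_C_mul_X _ _)
    have hwi : w i ≠ 0 := by simpa using hs his
    have hval : w i * eval (v i) (∑ j, C (a j) * X j) = 0 := by
      have := congrFun hNa i
      rw [map_sum, Finset.mul_sum]
      simpa [hN, Matrix.mulVec, dotProduct, mul_comm, mul_left_comm, mul_assoc] using this
    exact hi ((mul_eq_zero.mp hval).resolve_left hwi)
  rw [Matrix.rank_transpose] at hNrank
  rw [hMrank, hNrank, Fintype.card_fin] at hrank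
  omega
end

section
/- Let 1 ≤ r ≤ 8 and let v₁, …, v_r ∈ ℂ³ be nonzero, pairwise linearly independent vectors (representing r distinct points of ℂP²) such that no nonzero homogeneous polynomial of degree 1 in three variables vanishes at three of the vᵢ (no three of the points are colinear) and no nonzero homogeneous polynomial of degree 2 in three variables vanishes at six of the vᵢ (no six of the points lie on a conic). Then the ℂ-linear map from the space of homogeneous degree-3 polynomials in three variables to ℂʳ given by F ↦ (F(v₁), …, F(v_r)) is surjective; equivalently, the subspace of homogeneous cubic polynomials F with F(vᵢ) = 0 for all i has dimension 10 − r. (This computes dim H⁰(B_r, ⋀²T_{B_r}) = 10 − r for the blow-up B_r of ℂP² at r generic points.) -/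
open MvPolynomial

/-!
Evaluation of cubics at the points is surjective as soon as, for each `i`, some cubic vanishes at
all the other points but not at `v i` (`exists_cubic`): suitable multiples of these cubics add up
to any prescribed vector of values.

A finset of at most two other points lies on a line missing `v i` (`exists_line`). If there are at
most six other points, they are split into three such sets, and the product of the three lines is
the required cubic (`exists_lines`). If there are seven, five of them lie on a conic, because
quadratic forms in three variables have dimension `6 > 5`. That conic misses `v i`, since otherwise
six of the points would lie on a conic. Multiplying it by a line through the remaining two points
that misses `v i` gives the cubic.

The dimension statement is then rank-nullity, since cubic forms in three variables have
dimension `10`.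
-/

/-- The forms of degree `n` have a basis of monomials indexed by the exponents of degree `n`. -/
theorem finrank_homogeneousSubmodule_three (n : ℕ) :
    Module.finrank ℂ (homogeneousSubmodule (Fin 3) ℂ n) = (3 + n - 1).choose n := by
  classical
  have hset : {d : Fin 3 →₀ ℕ | d.degree = n} =
      ((Finset.univ : Finset (Fin 3)).finsuppAntidiag n : Set (Fin 3 →₀ ℕ)) := by
    ext d
    simp [Finsupp.degree_eq_sum]
  rw [homogeneousSubmodule_eq_finsupp_supported, hset,
    (AddMonoidAlgebra.supportedEquivFinsupp (R := ℂ) (S := ℂ) _).finrank_eq,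
    Module.finrank_finsupp_self]
  simp [Finset.card_finsuppAntidiag_nat_eq_choose]

instance finite_homogeneousSubmodule_three (n : ℕ) :
    Module.Finite ℂ (homogeneousSubmodule (Fin 3) ℂ n) :=
  Module.Finite.iff_fg.mpr (homogeneousSubmodule_fg (R := ℂ) (σ := Fin 3) n)

/-- Evaluation of forms of degree `n` at a family of vectors. -/
noncomputable def evalForms (n : ℕ) {ι : Type*} (v : ι → Fin 3 → ℂ) :
    homogeneousSubmodule (Fin 3) ℂ n →ₗ[ℂ] ι → ℂ :=
  LinearMap.pi fun i => (aeval (R := ℂ) (v i)).toLinearMap ∘ₗ Submodule.subtype _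

@[simp] theorem evalForms_apply (n : ℕ) {ι : Type*} (v : ι → Fin 3 → ℂ)
    (F : homogeneousSubmodule (Fin 3) ℂ n) (i : ι) :
    evalForms n v F i = eval (v i) (F : MvPolynomial (Fin 3) ℂ) := by
  simp [evalForms, aeval_eq_eval]

/-- Every linear functional on `ℂ³` is evaluation of a linear form. -/
theorem exists_form_of_dual (f : (Fin 3 → ℂ) →ₗ[ℂ] ℂ) :
    ∃ L : MvPolynomial (Fin 3) ℂ, L.IsHomogeneous 1 ∧ ∀ x, eval x L = f x := by
  refine ⟨∑ j, C (f fun k => if j = k then 1 else 0) * X j,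
    IsHomogeneous.sum _ _ _ fun j _ => isHomogeneous_C_mul_X _ _, fun x => ?_⟩
  rw [LinearMap.pi_apply_eq_sum_univ f x]
  simp [mul_comm]

section

variable {r : ℕ} {v : Fin r → (Fin 3 → ℂ)}

/-- At most two of the points lie on a line missing any other given point `v i`. -/
theorem exists_line (hv0 : ∀ i, v i ≠ 0)
    (hvind : ∀ i j, i ≠ j → LinearIndependent ℂ ![v i, v j])
    (hline : ¬ ∃ (L : MvPolynomial (Fin 3) ℂ) (s : Finset (Fin r)),
      L ≠ 0 ∧ L.IsHomogeneous 1 ∧ s.card = 3 ∧ ∀ i ∈ s, eval (v i) L = 0)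
    (i : Fin r) (s : Finset (Fin r)) (hs : s.card ≤ 2) (hi : i ∉ s) :
    ∃ L : MvPolynomial (Fin 3) ℂ, L.IsHomogeneous 1 ∧ (∀ j ∈ s, eval (v j) L = 0) ∧
      eval (v i) L ≠ 0 := by
  classical
  rcases hs.lt_or_eq with h | h
  · have hnot : v i ∉ Submodule.span ℂ (v '' s) := by
      have : Nonempty (Fin r) := ⟨i⟩
      rcases Finset.card_le_one_iff_subset_singleton.mp (Nat.le_of_lt_succ h) with ⟨a, ha⟩
      rcases Finset.subset_singleton_iff.mp ha with rfl | rfl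
      · simpa using hv0 i
      · have hai : a ≠ i := fun e => hi (by simp [e])
        have := (LinearIndependent.pair_iff' (hv0 a)).mp (hvind a i hai)
        simpa [Submodule.mem_span_singleton] using this
    obtain ⟨f, hf, hle⟩ := Submodule.exists_le_ker_of_notMem hnot
    obtain ⟨L, hL, hLf⟩ := exists_form_of_dual f
    refine ⟨L, hL, fun j hj => ?_, by rwa [hLf]⟩
    rw [hLf]
    exact hle (Submodule.subset_span ⟨j, hj, rfl⟩)
  · have hlt : Submodule.span ℂ ((s.image v : Finset _) : Set (Fin 3 → ℂ)) < ⊤ := by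
      refine Submodule.lt_top_of_finrank_lt_finrank ?_
      have h1 := finrank_span_finset_le_card (R := ℂ) (s.image v)
      have h2 : (s.image v).card ≤ s.card := Finset.card_image_le
      have h3 : Module.finrank ℂ (Fin 3 → ℂ) = 3 := by simp
      rw [Set.finrank] at h1
      omega
    obtain ⟨f, hf, hle⟩ := Submodule.exists_le_ker_of_lt_top _ hlt
    obtain ⟨L, hL, hLf⟩ := exists_form_of_dual f
    have hvan : ∀ j ∈ s, eval (v j) L = 0 := fun j hj => by
      rw [hLf]
      exact hle (Submodule.subset_span (by simpa using ⟨j, hj, rfl⟩))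
    refine ⟨L, hL, hvan, fun h0 => hline ⟨L, insert i s, ?_, hL, ?_, ?_⟩⟩
    · rintro rfl
      exact hf (LinearMap.ext fun x => by simp [← hLf])
    · rw [Finset.card_insert_of_notMem hi, h]
    · simpa [h0] using hvan

/-- At most `2 * m` of the points lie on a union of `m` lines missing any other given point. -/
theorem exists_lines (hv0 : ∀ i, v i ≠ 0)
    (hvind : ∀ i j, i ≠ j → LinearIndependent ℂ ![v i, v j])
    (hline : ¬ ∃ (L : MvPolynomial (Fin 3) ℂ) (s : Finset (Fin r)),
      L ≠ 0 ∧ L.IsHomogeneous 1 ∧ s.card = 3 ∧ ∀ i ∈ s, eval (v i) L = 0)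
    (i : Fin r) (m : ℕ) (s : Finset (Fin r)) (hs : s.card ≤ 2 * m) (hi : i ∉ s) :
    ∃ F : MvPolynomial (Fin 3) ℂ, F.IsHomogeneous m ∧ (∀ j ∈ s, eval (v j) F = 0) ∧
      eval (v i) F ≠ 0 := by
  classical
  induction m generalizing s with
  | zero =>
    obtain rfl : s = ∅ := by simpa using hs
    exact ⟨1, isHomogeneous_one _ _, by simp, by simp⟩
  | succ m ih =>
    obtain ⟨t, hts, ht⟩ := Finset.exists_subset_card_eq (min_le_right 2 s.card)
    have hcard := Finset.card_sdiff_add_card_eq_card hts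
    obtain ⟨F, hF, hF0, hFi⟩ := ih (s \ t) (by omega) (by simp [hi])
    obtain ⟨L, hL, hL0, hLi⟩ :=
      exists_line hv0 hvind hline i t (by omega) (fun h => hi (hts h))
    refine ⟨F * L, hF.mul hL, fun j hj => ?_, by simp [hFi, hLi]⟩
    by_cases hjt : j ∈ t
    · simp [hL0 j hjt]
    · simp [hF0 j (by simp [hj, hjt])]

/-- Five of the points lie on a conic missing any other given point. -/
theorem exists_conic
    (hconic : ¬ ∃ (Q : MvPolynomial (Fin 3) ℂ) (s : Finset (Fin r)),
      Q ≠ 0 ∧ Q.IsHomogeneous 2 ∧ s.card = 6 ∧ ∀ i ∈ s, eval (v i) Q = 0)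
    (i : Fin r) (s : Finset (Fin r)) (hs : s.card = 5) (hi : i ∉ s) :
    ∃ Q : MvPolynomial (Fin 3) ℂ, Q.IsHomogeneous 2 ∧ (∀ j ∈ s, eval (v j) Q = 0) ∧
      eval (v i) Q ≠ 0 := by
  classical
  have hker : LinearMap.ker (evalForms 2 fun j : s => v j) ≠ ⊥ := by
    apply LinearMap.ker_ne_bot_of_finrank_lt
    rw [finrank_homogeneousSubmodule_three]
    simp [hs, Nat.choose]
  obtain ⟨Q, hQ, hQ0⟩ := Submodule.exists_mem_ne_zero_of_ne_bot hker
  have hvan : ∀ j ∈ s, eval (v j) (Q : MvPolynomial (Fin 3) ℂ) = 0 := fun j hj => by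
    simpa using congrFun (LinearMap.mem_ker.mp hQ) ⟨j, hj⟩
  refine ⟨Q, Q.2, hvan, fun h0 => hconic ⟨Q, insert i s, by simpa using hQ0, Q.2, ?_, ?_⟩⟩
  · rw [Finset.card_insert_of_notMem hi, hs]
  · simpa [h0] using hvan

/-- For at most eight generic points, some cubic passes through all of them but `v i`. -/
theorem exists_cubic (hr8 : r ≤ 8) (hv0 : ∀ i, v i ≠ 0)
    (hvind : ∀ i j, i ≠ j → LinearIndependent ℂ ![v i, v j])
    (hline : ¬ ∃ (L : MvPolynomial (Fin 3) ℂ) (s : Finset (Fin r)),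
      L ≠ 0 ∧ L.IsHomogeneous 1 ∧ s.card = 3 ∧ ∀ i ∈ s, eval (v i) L = 0)
    (hconic : ¬ ∃ (Q : MvPolynomial (Fin 3) ℂ) (s : Finset (Fin r)),
      Q ≠ 0 ∧ Q.IsHomogeneous 2 ∧ s.card = 6 ∧ ∀ i ∈ s, eval (v i) Q = 0) (i : Fin r) :
    ∃ F : MvPolynomial (Fin 3) ℂ, F.IsHomogeneous 3 ∧ (∀ j, j ≠ i → eval (v j) F = 0) ∧
      eval (v i) F ≠ 0 := by
  classical
  have hcard : (Finset.univ.erase i).card = r - 1 := by simp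
  rcases Nat.lt_or_ge 7 r with h | h
  · obtain ⟨t, hts, ht⟩ :=
      Finset.exists_subset_card_eq (s := Finset.univ.erase i) (n := 5) (by omega)
    have hsd := Finset.card_sdiff_add_card_eq_card hts
    obtain ⟨Q, hQ, hQ0, hQi⟩ := exists_conic hconic i t ht (fun hi => by simpa using hts hi)
    obtain ⟨L, hL, hL0, hLi⟩ :=
      exists_line hv0 hvind hline i (Finset.univ.erase i \ t) (by omega) (by simp)
    refine ⟨Q * L, hQ.mul hL, fun j hj => ?_, by simp [hQi, hLi]⟩
    by_cases hjt : j ∈ t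
    · simp [hQ0 j hjt]
    · simp [hL0 j (by simp [hj, hjt])]
  · obtain ⟨F, hF, hF0, hFi⟩ :=
      exists_lines hv0 hvind hline i 3 (Finset.univ.erase i) (by omega) (by simp)
    exact ⟨F, hF, fun j hj => hF0 j (by simp [hj]), hFi⟩

end

/-- For `r` generic points of ℂP² (no three colinear, no six on a conic), the evaluation
map from homogeneous cubics to ℂʳ is surjective; equivalently the space of cubics
vanishing at all the points has dimension `10 - r`.  This computes
`dim H⁰(B_r, ⋀²T_{B_r}) = 10 - r`. -/
theorem statement5 (r : ℕ) (hr1 : 1 ≤ r) (hr8 : r ≤ 8) (v : Fin r → (Fin 3 → ℂ))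
    (hv0 : ∀ i, v i ≠ 0)
    (hvind : ∀ i j, i ≠ j → LinearIndependent ℂ ![v i, v j])
    (hline : ¬ ∃ (L : MvPolynomial (Fin 3) ℂ) (s : Finset (Fin r)),
      L ≠ 0 ∧ L.IsHomogeneous 1 ∧ s.card = 3 ∧ ∀ i ∈ s, eval (v i) L = 0)
    (hconic : ¬ ∃ (Q : MvPolynomial (Fin 3) ℂ) (s : Finset (Fin r)),
      Q ≠ 0 ∧ Q.IsHomogeneous 2 ∧ s.card = 6 ∧ ∀ i ∈ s, eval (v i) Q = 0) :
    (∀ y : Fin r → ℂ, ∃ F : MvPolynomial (Fin 3) ℂ,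
      F.IsHomogeneous 3 ∧ ∀ i, eval (v i) F = y i) ∧
    Module.finrank ℂ
      ↥((homogeneousSubmodule (Fin 3) ℂ 3) ⊓
        ⨅ i, LinearMap.ker ((aeval (R := ℂ) (v i)).toLinearMap)) = 10 - r := by
  have hsurj : ∀ y : Fin r → ℂ, ∃ F : MvPolynomial (Fin 3) ℂ,
      F.IsHomogeneous 3 ∧ ∀ i, eval (v i) F = y i := by
    intro y
    choose F hF hF0 hFi using exists_cubic hr8 hv0 hvind hline hconic
    refine ⟨∑ j, C (y j / eval (v j) (F j)) * F j,
      IsHomogeneous.sum _ _ _ fun j _ => (hF j).C_mul _, fun i => ?_⟩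
    rw [map_sum, Finset.sum_eq_single i]
    · simp [hFi i]
    · intro j _ hj
      simp [hF0 j i hj.symm]
    · simp
  refine ⟨hsurj, ?_⟩
  have hrange : LinearMap.range (evalForms 3 v) = ⊤ := by
    rw [LinearMap.range_eq_top]
    intro y
    obtain ⟨F, hF, hFy⟩ := hsurj y
    exact ⟨⟨F, hF⟩, funext fun i => by simp [hFy]⟩
  have hrn := LinearMap.finrank_range_add_finrank_ker (evalForms 3 v)
  rw [hrange, finrank_top, finrank_homogeneousSubmodule_three, Module.finrank_fin_fun] at hrn
  have hker : (homogeneousSubmodule (Fin 3) ℂ 3) ⊓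
      ⨅ i, LinearMap.ker ((aeval (R := ℂ) (v i)).toLinearMap) =
      (LinearMap.ker (evalForms 3 v)).map (Submodule.subtype _) := by
    rw [evalForms, LinearMap.ker_pi]
    simp_rw [LinearMap.ker_comp]
    rw [← Submodule.comap_iInf, Submodule.map_comap_subtype]
  rw [hker, Submodule.finrank_map_subtype_eq]
  have h10 : (3 + 3 - 1).choose 3 = 10 := by decide
  omega
end

section
/- Let 1 ≤ r ≤ 3 and let p₁, …, p_r ∈ ℂ² be distinct points, no three of which lie on a common (affine) line. Then the ℂ-vector space of pairs (f,g) of polynomials of the form f = b₁ + b₂x + b₃w + b₇x² + b₈xw, g = b₄ + b₅x + b₆w + b₇xw + b₈w² (with b₁,…,b₈ ∈ ℂ) such that f(pᵢ) = g(pᵢ) = 0 for all i = 1, …, r has dimension 8 − 2r. (This computes dim H⁰(B_r, T_{B_r}) = 8 − 2r for 1 ≤ r ≤ 3.) -/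
/-! The evaluation map `b ↦ (f(pᵢ), g(pᵢ))ᵢ` from `ℂ⁸` to `ℂ^r × ℂ^r` has the space in question as
its kernel, so by rank-nullity it suffices that it is surjective. Already the coefficients with
`b₇ = b₈ = 0`, for which `f` and `g` are arbitrary affine functions, attain every value: at most
three distinct points, not collinear if there are three, are affinely independent
(`affineIndependent_of_noncollinear`), and an affine function can take prescribed values at
affinely independent points (`exists_affine_interpolation`). -/

/-- Evaluation at `p` of `f = b₁ + b₂x + b₃w + b₇x² + b₈xw` as a linear functional in the
coefficients `b = (b₁,…,b₈)` (indexed by `Fin 8`). -/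
noncomputable def evalF (p : ℂ × ℂ) : (Fin 8 → ℂ) →ₗ[ℂ] ℂ :=
  LinearMap.proj 0 + p.1 • LinearMap.proj 1 + p.2 • LinearMap.proj 2
    + p.1 ^ 2 • LinearMap.proj 6 + (p.1 * p.2) • LinearMap.proj 7

/-- Evaluation at `p` of `g = b₄ + b₅x + b₆w + b₇xw + b₈w²` as a linear functional in the
coefficients `b = (b₁,…,b₈)` (indexed by `Fin 8`). -/
noncomputable def evalG (p : ℂ × ℂ) : (Fin 8 → ℂ) →ₗ[ℂ] ℂ :=
  LinearMap.proj 3 + p.1 • LinearMap.proj 4 + p.2 • LinearMap.proj 5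
    + (p.1 * p.2) • LinearMap.proj 6 + p.2 ^ 2 • LinearMap.proj 7

/-- At most three distinct points, no three of them collinear, are affinely independent. -/
theorem affineIndependent_of_noncollinear (r : ℕ) (hr3 : r ≤ 3) (p : Fin r → ℂ × ℂ)
    (hinj : Function.Injective p)
    (hcol : ∀ i j k : Fin r, i ≠ j → i ≠ k → j ≠ k →
      ¬ Collinear ℂ ({p i, p j, p k} : Set (ℂ × ℂ))) :
    AffineIndependent ℂ p := by
  have h : r = 0 ∨ r = 1 ∨ r = 2 ∨ r = 3 := by omega
  rcases h with rfl | rfl | rfl | rfl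
  · exact affineIndependent_of_subsingleton ℂ p
  · exact affineIndependent_of_subsingleton ℂ p
  · have hp : p = ![p 0, p 1] := by ext i <;> fin_cases i <;> rfl
    rw [hp]
    exact affineIndependent_of_ne ℂ (hinj.ne (by decide))
  · have hp : p = ![p 0, p 1, p 2] := by ext i <;> fin_cases i <;> rfl
    rw [hp]
    exact affineIndependent_iff_not_collinear_set.2
      (hcol 0 1 2 (by decide) (by decide) (by decide))

/-- An affine function `a + b x + c w` can take prescribed values at affinely independent points:
the lifted vectors `(1, x, w)` are linearly independent, so a linear functional can be prescribed
on them. -/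
theorem exists_affine_interpolation {r : ℕ} {p : Fin r → ℂ × ℂ} (hp : AffineIndependent ℂ p)
    (u : Fin r → ℂ) : ∃ a b c : ℂ, ∀ i, a + (p i).1 * b + (p i).2 * c = u i := by
  have hli : LinearIndependent ℂ (fun i => ((1 : ℂ), p i)) := by
    rw [Fintype.linearIndependent_iff]
    intro w hw i
    have h1 : ∑ i, w i = 0 := by simpa [Prod.fst_sum] using congrArg Prod.fst hw
    have h2 : ∑ i, w i • p i = 0 := by simpa [Prod.snd_sum, -Prod.smul_mk, Prod.smul_snd] using congrArg Prod.snd hw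
    exact affineIndependent_iff.1 hp Finset.univ w h1 h2 i (Finset.mem_univ i)
  obtain ⟨φ, hφ⟩ : ∃ φ : ℂ × ℂ × ℂ →ₗ[ℂ] ℂ, ∀ i, φ (1, p i) = u i := by
    obtain ⟨g, hg⟩ := LinearMap.exists_leftInverse_of_injective
      (Fintype.linearCombination ℂ (fun i => ((1 : ℂ), p i)))
      (LinearMap.ker_eq_bot.2 hli.fintypeLinearCombination_injective)
    refine ⟨Fintype.linearCombination ℂ u ∘ₗ g, fun i => ?_⟩
    have := LinearMap.congr_fun hg (Pi.single i 1)
    simp only [LinearMap.comp_apply, Fintype.linearCombination_apply_single, one_smul,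
      LinearMap.id_apply] at this
    simp [this]
  refine ⟨φ (1, 0, 0), φ (0, 1, 0), φ (0, 0, 1), fun i => ?_⟩
  rw [← hφ i, ← smul_eq_mul, ← smul_eq_mul, ← map_smul, ← map_smul, ← map_add, ← map_add]
  congr 1
  ext <;> simp

/-- For `1 ≤ r ≤ 3` distinct points in ℂ², no three colinear, the space of pairs
`(f,g) = (b₁ + b₂x + b₃w + b₇x² + b₈xw, b₄ + b₅x + b₆w + b₇xw + b₈w²)` vanishing at all
the points has dimension `8 - 2r`.  This computes `dim H⁰(B_r, T_{B_r}) = 8 - 2r`. -/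
theorem statement6 (r : ℕ) (hr1 : 1 ≤ r) (hr3 : r ≤ 3) (p : Fin r → ℂ × ℂ)
    (hinj : Function.Injective p)
    (hcol : ∀ i j k : Fin r, i ≠ j → i ≠ k → j ≠ k →
      ¬ Collinear ℂ ({p i, p j, p k} : Set (ℂ × ℂ))) :
    Module.finrank ℂ
      ↥(⨅ i, (LinearMap.ker (evalF (p i)) ⊓ LinearMap.ker (evalG (p i)))) = 8 - 2 * r := by
  have hp := affineIndependent_of_noncollinear r hr3 p hinj hcol
  let T : (Fin 8 → ℂ) →ₗ[ℂ] (Fin r → ℂ) × (Fin r → ℂ) :=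
    (LinearMap.pi fun i => evalF (p i)).prod (LinearMap.pi fun i => evalG (p i))
  have hker : (⨅ i, (LinearMap.ker (evalF (p i)) ⊓ LinearMap.ker (evalG (p i))))
      = LinearMap.ker T := by
    simp only [T, LinearMap.ker_prod, LinearMap.ker_pi, iInf_inf_eq]
  have hsurj : LinearMap.range T = ⊤ := by
    rw [LinearMap.range_eq_top]
    rintro ⟨u, v⟩
    obtain ⟨a, b, c, hu⟩ := exists_affine_interpolation hp u
    obtain ⟨d, e, f, hv⟩ := exists_affine_interpolation hp v
    refine ⟨![a, b, c, d, e, f, 0, 0], Prod.ext (funext fun i => ?_) (funext fun i => ?_)⟩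
    · simp [T, evalF, ← hu i]
    · simp [T, evalG, ← hv i]
  have hrank := LinearMap.finrank_range_add_finrank_ker T
  rw [hsurj, finrank_top, Module.finrank_prod] at hrank
  simp only [Module.finrank_fin_fun] at hrank
  rw [hker]
  omega
end

section
/- Let p₁, p₂, p₃, p₄ ∈ ℂ² be four distinct points, no three of which lie on a common (affine) line. If f = b₁ + b₂x + b₃w + b₇x² + b₈xw and g = b₄ + b₅x + b₆w + b₇xw + b₈w² (with b₁,…,b₈ ∈ ℂ) satisfy f(pᵢ) = g(pᵢ) = 0 for i = 1, 2, 3, 4, then b₁ = b₂ = … = b₈ = 0, i.e. f = g = 0. (This proves dim H⁰(B_r, T_{B_r}) = 0 for r ≥ 4.) -/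
/-!
Write `l(q) = b₇ x + b₈ w` for `q = (x, w)`. The vector field is `(f, g)(q) = c + L q + l(q) q` with
`c` constant and `L` linear, so it vanishes at `q` exactly when `v = (x, w, 1)` is an eigenvector,
with eigenvalue `-l(q)`, of the 3 × 3 matrix of `(q, t) ↦ (c t + L q, -l(q))`. Four eigenvectors in
`ℂ³`, any three of which are independent, have a common eigenvalue (`lin_eq_of_vanish`). Hence `l`
is constant on three non-collinear points, so `l = 0`; now `f` and `g` are affine functions
vanishing at three non-collinear points, so they are zero (`affine_eq_zero`).
-/

/-- The determinant of the vectors `(q.1, q.2, 1)`, `(r.1, r.2, 1)`, `(s.1, s.2, 1)`. -/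
def triDet (q r s : ℂ × ℂ) : ℂ :=
  (r.1 - q.1) * (s.2 - q.2) - (s.1 - q.1) * (r.2 - q.2)

lemma triDet_ne_zero {q r s : ℂ × ℂ} (h : ¬ Collinear ℂ ({q, r, s} : Set (ℂ × ℂ)))
    (hqr : q ≠ r) : triDet q r s ≠ 0 := by
  intro hD
  unfold triDet at hD
  apply h
  rw [collinear_iff_of_mem (p₀ := q) (by simp)]
  refine ⟨r - q, ?_⟩
  have key : ∃ t : ℂ, s = t • (r - q) +ᵥ q := by
    by_cases hx : r.1 - q.1 = 0
    · have hw : r.2 - q.2 ≠ 0 := fun hw =>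
        hqr (Prod.ext (sub_eq_zero.1 hx).symm (sub_eq_zero.1 hw).symm)
      have hs : s.1 - q.1 = 0 := by
        rw [hx, zero_mul, zero_sub, neg_eq_zero] at hD
        exact (mul_eq_zero.1 hD).resolve_right hw
      refine ⟨(s.2 - q.2) / (r.2 - q.2), Prod.ext ?_ ?_⟩
      · simp [hx, sub_eq_zero.1 hs]
      · simp [div_mul_cancel₀ _ hw]
    · refine ⟨(s.1 - q.1) / (r.1 - q.1), Prod.ext ?_ ?_⟩
      · simp [div_mul_cancel₀ _ hx]
      · simp only [vadd_eq_add, Prod.snd_add, Prod.smul_snd, Prod.snd_sub, smul_eq_mul]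
        field_simp
        linear_combination hD
  rintro y (rfl | rfl | rfl)
  · exact ⟨0, by simp⟩
  · exact ⟨1, by simp⟩
  · exact key

lemma affine_eq_zero {q r s : ℂ × ℂ} (hD : triDet q r s ≠ 0) {a b c : ℂ}
    (hq : a + b * q.1 + c * q.2 = 0) (hr : a + b * r.1 + c * r.2 = 0)
    (hs : a + b * s.1 + c * s.2 = 0) : a = 0 ∧ b = 0 ∧ c = 0 := by
  have hb : b = 0 := by
    refine (mul_eq_zero.1 (?_ : triDet q r s * b = 0)).resolve_left hD
    unfold triDet
    linear_combination (s.2 - q.2) * (hr - hq) - (r.2 - q.2) * (hs - hq)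
  have hc : c = 0 := by
    refine (mul_eq_zero.1 (?_ : triDet q r s * c = 0)).resolve_left hD
    unfold triDet
    linear_combination (r.1 - q.1) * (hs - hq) - (s.1 - q.1) * (hr - hq)
  subst hb hc
  exact ⟨by simpa using hq, rfl, rfl⟩

/-- If the field vanishes at `q, r, s, t`, then `q` and `t` give the same eigenvalue: compare the
coefficients of `q` in the expansion of the vector of `t` along those of `q`, `r`, `s` and in the
image of that expansion under the matrix. -/
lemma lin_eq_of_vanish (b : Fin 8 → ℂ) {q r s t : ℂ × ℂ}
    (hD : triDet q r s ≠ 0) (hD' : triDet t r s ≠ 0)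
    (h : ∀ y : ℂ × ℂ, y = q ∨ y = r ∨ y = s ∨ y = t →
      b 0 + b 1 * y.1 + b 2 * y.2 + b 6 * y.1 ^ 2 + b 7 * (y.1 * y.2) = 0 ∧
      b 3 + b 4 * y.1 + b 5 * y.2 + b 6 * (y.1 * y.2) + b 7 * y.2 ^ 2 = 0) :
    b 6 * q.1 + b 7 * q.2 = b 6 * t.1 + b 7 * t.2 := by
  obtain ⟨fq, gq⟩ := h q (by simp)
  obtain ⟨fr, gr⟩ := h r (by simp)
  obtain ⟨fs, gs⟩ := h s (by simp)
  obtain ⟨ft, gt⟩ := h t (by simp)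
  rw [← sub_eq_zero]
  refine (mul_eq_zero.1 (?_ : (triDet q r s * triDet t r s) *
    (b 6 * q.1 + b 7 * q.2 - (b 6 * t.1 + b 7 * t.2)) = 0)).resolve_left (mul_ne_zero hD hD')
  -- Cramer's rule gives the coefficients of the vector of `t`; the factors `r.2 - s.2` and
  -- `r.1 - s.1` are the cofactors in the determinant of `(f, g, 0)` and the vectors of `r`, `s`.
  unfold triDet
  linear_combination
    (-((r.1 - q.1) * (s.2 - q.2) - (s.1 - q.1) * (r.2 - q.2))) *
        ((r.2 - s.2) * ft - (r.1 - s.1) * gt)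
    + ((r.1 - t.1) * (s.2 - t.2) - (s.1 - t.1) * (r.2 - t.2)) *
        ((r.2 - s.2) * fq - (r.1 - s.1) * gq)
    + ((t.1 - q.1) * (s.2 - q.2) - (s.1 - q.1) * (t.2 - q.2)) *
        ((r.2 - s.2) * fr - (r.1 - s.1) * gr)
    + ((r.1 - q.1) * (t.2 - q.2) - (t.1 - q.1) * (r.2 - q.2)) *
        ((r.2 - s.2) * fs - (r.1 - s.1) * gs)

/-- If `f = b₁ + b₂x + b₃w + b₇x² + b₈xw` and `g = b₄ + b₅x + b₆w + b₇xw + b₈w²` both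
vanish at four distinct points of ℂ², no three of which are colinear, then all the
coefficients vanish.  This proves `dim H⁰(B_r, T_{B_r}) = 0` for `r ≥ 4`. -/
theorem statement7 (p : Fin 4 → ℂ × ℂ)
    (hinj : Function.Injective p)
    (hcol : ∀ i j k : Fin 4, i ≠ j → i ≠ k → j ≠ k →
      ¬ Collinear ℂ ({p i, p j, p k} : Set (ℂ × ℂ)))
    (b : Fin 8 → ℂ)
    (hf : ∀ i, b 0 + b 1 * (p i).1 + b 2 * (p i).2 + b 6 * (p i).1 ^ 2
      + b 7 * ((p i).1 * (p i).2) = 0)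
    (hg : ∀ i, b 3 + b 4 * (p i).1 + b 5 * (p i).2 + b 6 * ((p i).1 * (p i).2)
      + b 7 * (p i).2 ^ 2 = 0) :
    b = 0 := by
  have hD : ∀ i j k : Fin 4, i ≠ j → i ≠ k → j ≠ k → triDet (p i) (p j) (p k) ≠ 0 :=
    fun i j k hij hik hjk => triDet_ne_zero (hcol i j k hij hik hjk) (hinj.ne hij)
  have hl : ∀ i j k m : Fin 4, i ≠ j → i ≠ k → j ≠ k → m ≠ j → m ≠ k →
      b 6 * (p i).1 + b 7 * (p i).2 = b 6 * (p m).1 + b 7 * (p m).2 := by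
    intro i j k m hij hik hjk hmj hmk
    refine lin_eq_of_vanish b (hD i j k hij hik hjk) (hD m j k hmj hmk hjk) ?_
    rintro y (rfl | rfl | rfl | rfl) <;> exact ⟨hf _, hg _⟩
  have h0 := hl 0 1 2 3 (by decide) (by decide) (by decide) (by decide) (by decide)
  have h1 := hl 1 0 2 3 (by decide) (by decide) (by decide) (by decide) (by decide)
  have h2 := hl 2 0 1 3 (by decide) (by decide) (by decide) (by decide) (by decide)
  have hd := hD 0 1 2 (by decide) (by decide) (by decide)
  obtain ⟨-, b6, b7⟩ := affine_eq_zero hd (a := -(b 6 * (p 3).1 + b 7 * (p 3).2))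
    (b := b 6) (c := b 7) (by linear_combination h0) (by linear_combination h1)
    (by linear_combination h2)
  simp only [b6, b7, zero_mul, add_zero] at hf hg
  obtain ⟨b0, b1, b2⟩ := affine_eq_zero hd (hf 0) (hf 1) (hf 2)
  obtain ⟨b3, b4, b5⟩ := affine_eq_zero hd (hg 0) (hg 1) (hg 2)
  funext i
  fin_cases i <;> assumption
end

section
/- Let h = a₁ + a₂x + a₃w + a₄x² + a₅xw + a₆w² + a₇x³ + a₈x²w + a₉xw² + a₁₀w³ ∈ W, and let d_h : V → W be the linear map d_h(f,g) = h·∂f/∂x − f·∂h/∂x + h·∂g/∂w − g·∂h/∂w. With respect to the basis v₁,…,v₈ of V (where v_i is the pair with b_k = δ_{ik}) and the basis 1, x, w, x², xw, w², x³, x²w, xw², w³ of W, the matrix of d_h is the 10×8 matrix A whose rows are: (−a₂, a₁, 0, −a₃, 0, a₁, 0, 0); (−2a₄, 0, 0, −a₅, −a₃, a₂, 3a₁, 0); (−a₅, a₃, −a₂, −2a₆, 0, 0, 0, 3a₁); (−3a₇, −a₄, 0, −a₈, −a₅, a₄, 2a₂, 0); (−2a₈, 0, −2a₄, −2a₉,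 −2a₆, 0, 2a₃, 2a₂); (−a₉, a₆, −a₅, −3a₁₀, 0, −a₆, 0, 2a₃); (0, −2a₇, 0, 0, −a₈, a₇, a₄, 0); (0, −a₈, −3a₇, 0, −2a₉, 0, a₅, a₄); (0, 0, −2a₈, 0, −3a₁₀, −a₉, a₆, a₅); (0, a₁₀, −a₉, 0, 0, −2a₁₀, 0, a₆). Consequently the kernel of d_h has dimension 8 − rank(A) and the quotient W / image(d_h) has dimension 10 − rank(A). (For the holomorphic Poisson structure π = h ∂/∂x ∧ ∂/∂w on ℂP², these are dim H¹_π(ℂP²) and dim H²_π(ℂP²) respectively.) -/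
/-!
The matrix formula is a polynomial identity in `X 0`, `X 1` and the constants `C (a k)`, `C (b j)`:
once the partial derivatives of `h`, `f`, `g` are computed by the Leibniz rule, it holds in the
commutative ring `MvPolynomial (Fin 2) ℂ`. The two dimension counts are rank-nullity and the
dimension formula for a quotient, the rank being the dimension of the range; both are equations
of the form `rank + d = n`, so the subtractions in `ℕ` do not truncate.
-/

open MvPolynomial

/-- The Schouten bracket coefficient `h·∂f/∂x − f·∂h/∂x + h·∂g/∂w − g·∂h/∂w`, where the
variables are `x = X 0`, `w = X 1`. -/
noncomputable def bracket (h f g : MvPolynomial (Fin 2) ℂ) : MvPolynomial (Fin 2) ℂ :=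
  h * pderiv 0 f - f * pderiv 0 h + h * pderiv 1 g - g * pderiv 1 h

/-- The monomial basis `1, x, w, x², xw, w², x³, x²w, xw², w³` of the 10-dimensional
space `W` of polynomials of total degree ≤ 3. -/
noncomputable def mW : Fin 10 → MvPolynomial (Fin 2) ℂ :=
  ![1, X 0, X 1, X 0 ^ 2, X 0 * X 1, X 1 ^ 2, X 0 ^ 3, X 0 ^ 2 * X 1, X 0 * X 1 ^ 2,
    X 1 ^ 3]

/-- `h = a₁ + a₂x + a₃w + a₄x² + a₅xw + a₆w² + a₇x³ + a₈x²w + a₉xw² + a₁₀w³ ∈ W`, with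
coefficients `a₁,…,a₁₀` indexed by `Fin 10`. -/
noncomputable def hCP2 (a : Fin 10 → ℂ) : MvPolynomial (Fin 2) ℂ :=
  ∑ k, C (a k) * mW k

/-- `f = b₁ + b₂x + b₃w + b₇x² + b₈xw`, coefficients `b₁,…,b₈` indexed by `Fin 8`. -/
noncomputable def fCP2 (b : Fin 8 → ℂ) : MvPolynomial (Fin 2) ℂ :=
  C (b 0) + C (b 1) * X 0 + C (b 2) * X 1 + C (b 6) * X 0 ^ 2 + C (b 7) * (X 0 * X 1)

/-- `g = b₄ + b₅x + b₆w + b₇xw + b₈w²`, coefficients `b₁,…,b₈` indexed by `Fin 8`. -/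
noncomputable def gCP2 (b : Fin 8 → ℂ) : MvPolynomial (Fin 2) ℂ :=
  C (b 3) + C (b 4) * X 0 + C (b 5) * X 1 + C (b 6) * (X 0 * X 1) + C (b 7) * X 1 ^ 2

/-- The 10 × 8 matrix `A_π` of Equation (3.4) of the paper, for
`h = a₁ + a₂x + ⋯ + a₁₀w³`. -/
def Apmanifold (a : Fin 10 → ℂ) : Matrix (Fin 10) (Fin 8) ℂ :=
  !![-a 1, a 0, 0, -a 2, 0, a 0, 0, 0;
     -2*a 3, 0, 0, -a 4, -a 2, a 1, 3*a 0, 0;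
     -a 4, a 2, -a 1, -2*a 5, 0, 0, 0, 3*a 0;
     -3*a 6, -a 3, 0, -a 7, -a 4, a 3, 2*a 1, 0;
     -2*a 7, 0, -2*a 3, -2*a 8, -2*a 5, 0, 2*a 2, 2*a 1;
     -a 8, a 5, -a 4, -3*a 9, 0, -a 5, 0, 2*a 2;
     0, -2*a 6, 0, 0, -a 7, a 6, a 3, 0;
     0, -a 7, -3*a 6, 0, -2*a 8, 0, a 4, a 3;
     0, 0, -2*a 7, 0, -3*a 9, -a 8, a 5, a 4;
     0, a 9, -a 8, 0, 0, -2*a 9, 0, a 5]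

/-- With respect to the bases `v₁,…,v₈` of `V` and `1, x, w, x², xw, w², x³, x²w, xw², w³`
of `W`, the matrix of `d_h : V → W`, `d_h(f,g) = h·∂f/∂x − f·∂h/∂x + h·∂g/∂w − g·∂h/∂w`,
is the 10 × 8 matrix `A = Apmanifold a`; consequently `ker d_h` has dimension
`8 − rank A` and `W/im d_h` has dimension `10 − rank A`.  For the Poisson structure
`π = h ∂/∂x ∧ ∂/∂w` on ℂP² these are `dim H¹_π(ℂP²)` and `dim H²_π(ℂP²)`. -/
theorem statement10 (a : Fin 10 → ℂ) :
    (∀ b : Fin 8 → ℂ, bracket (hCP2 a) (fCP2 b) (gCP2 b)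
      = ∑ i, C (((Apmanifold a).mulVec b) i) * mW i) ∧
    Module.finrank ℂ (LinearMap.ker (Apmanifold a).mulVecLin)
      = 8 - (Apmanifold a).rank ∧
    Module.finrank ℂ ((Fin 10 → ℂ) ⧸ LinearMap.range (Apmanifold a).mulVecLin)
      = 10 - (Apmanifold a).rank := by
  refine ⟨fun b => ?_, ?_, ?_⟩
  · simp only [bracket, hCP2, fCP2, gCP2, mW, Apmanifold, Fin.sum_univ_succ, Matrix.mulVec,
      dotProduct]
    simp [Derivation.leibniz, Derivation.leibniz_pow, pderiv_X]
    -- `simp` leaves the numeric matrix entries as `C 2` and `C 3`, which `ring` treats as atoms.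
    simp only [show (C (2 : ℂ) : MvPolynomial (Fin 2) ℂ) = 2 from map_ofNat C 2,
      show (C (3 : ℂ) : MvPolynomial (Fin 2) ℂ) = 3 from map_ofNat C 3]
    ring
  · have := (Apmanifold a).mulVecLin.finrank_range_add_finrank_ker
    rw [Module.finrank_fin_fun] at this
    rw [Matrix.rank]
    omega
  · have := (LinearMap.range (Apmanifold a).mulVecLin).finrank_quotient_add_finrank
    rw [Module.finrank_fin_fun] at this
    rw [Matrix.rank]
    omega
end

section
/- Let h = a₁ + a₂x + a₃x² + a₄w + a₅xw + a₆x²w + a₇w² + a₈xw² + a₉x²w² ∈ W', and let d_h : V' → W' be the linear map d_h(f,g) = h·∂f/∂x − f·∂h/∂x + h·∂g/∂w − g·∂h/∂w. With respect to the basis v₁,…,v₆ of V' (where v_i is the pair with b_k = δ_{ik}) and the basis 1, x, x², w, xw, x²w, w², xw², x²w² of W', the matrix of d_h is the 9×6 matrix A whose rows are: (−a₂, a₁, 0, −a₄, a₁, 0); (−2a₃, 0, 2a₁, −a₅, a₂, 0); (0, −a₃, a₂, −a₆, a₃, 0); (−a₅, a₄, 0, −2a₇, 0, 2a₁); (−2a₆,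 0, 2a₄, −2a₈, 0, 2a₂); (0, −a₆, a₅, −2a₉, 0, 2a₃); (−a₈, a₇, 0, 0, −a₇, a₄); (−2a₉, 0, 2a₇, 0, −a₈, a₅); (0, −a₉, a₈, 0, −a₉, a₆). Consequently the kernel of d_h has dimension 6 − rank(A) and the quotient W' / image(d_h) has dimension 9 − rank(A). (For the holomorphic Poisson structure π = h ∂/∂x ∧ ∂/∂w on ℂP¹ × ℂP¹, these are dim H¹_π and dim H²_π respectively.) -/
open MvPolynomial

/-- The monomial basis `1, x, x², w, xw, x²w, w², xw², x²w²` of the 9-dimensional space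
`W'` of polynomials of degree ≤ 2 in `x` and ≤ 2 in `w`. -/
noncomputable def mW' : Fin 9 → MvPolynomial (Fin 2) ℂ :=
  ![1, X 0, X 0 ^ 2, X 1, X 0 * X 1, X 0 ^ 2 * X 1, X 1 ^ 2, X 0 * X 1 ^ 2,
    X 0 ^ 2 * X 1 ^ 2]

/-- `h = a₁ + a₂x + a₃x² + a₄w + a₅xw + a₆x²w + a₇w² + a₈xw² + a₉x²w² ∈ W'`, with
coefficients `a₁,…,a₉` indexed by `Fin 9`. -/
noncomputable def hP1P1 (a : Fin 9 → ℂ) : MvPolynomial (Fin 2) ℂ :=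
  ∑ k, C (a k) * mW' k

/-- `f = b₁ + b₂x + b₃x²`, coefficients `b₁,…,b₆` indexed by `Fin 6`. -/
noncomputable def fP1P1 (b : Fin 6 → ℂ) : MvPolynomial (Fin 2) ℂ :=
  C (b 0) + C (b 1) * X 0 + C (b 2) * X 0 ^ 2

/-- `g = b₄ + b₅w + b₆w²`, coefficients `b₁,…,b₆` indexed by `Fin 6`. -/
noncomputable def gP1P1 (b : Fin 6 → ℂ) : MvPolynomial (Fin 2) ℂ :=
  C (b 3) + C (b 4) * X 1 + C (b 5) * X 1 ^ 2

/-- The 9 × 6 matrix `A_π` of Equation (3.6) of the paper. -/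
def AP1P1 (a : Fin 9 → ℂ) : Matrix (Fin 9) (Fin 6) ℂ :=
  !![-a 1, a 0, 0, -a 3, a 0, 0;
     -2*a 2, 0, 2*a 0, -a 4, a 1, 0;
     0, -a 2, a 1, -a 5, a 2, 0;
     -a 4, a 3, 0, -2*a 6, 0, 2*a 0;
     -2*a 5, 0, 2*a 3, -2*a 7, 0, 2*a 1;
     0, -a 5, a 4, -2*a 8, 0, 2*a 2;
     -a 7, a 6, 0, 0, -a 6, a 3;
     -2*a 8, 0, 2*a 6, 0, -a 7, a 4;
     0, -a 8, a 7, 0, -a 8, a 5]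

/-- With respect to the bases `v₁,…,v₆` of `V'` and `1, x, x², w, xw, x²w, w², xw², x²w²`
of `W'`, the matrix of `d_h : V' → W'` is the 9 × 6 matrix `A = AP1P1 a`; consequently
`ker d_h` has dimension `6 − rank A` and `W'/im d_h` has dimension `9 − rank A`.  For the
Poisson structure `π = h ∂/∂x ∧ ∂/∂w` on ℂP¹ × ℂP¹ these are `dim H¹_π` and
`dim H²_π`. -/
theorem statement11 (a : Fin 9 → ℂ) :
    (∀ b : Fin 6 → ℂ, bracket (hP1P1 a) (fP1P1 b) (gP1P1 b)
      = ∑ i, C (((AP1P1 a).mulVec b) i) * mW' i) ∧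
    Module.finrank ℂ (LinearMap.ker (AP1P1 a).mulVecLin) = 6 - (AP1P1 a).rank ∧
    Module.finrank ℂ ((Fin 9 → ℂ) ⧸ LinearMap.range (AP1P1 a).mulVecLin)
      = 9 - (AP1P1 a).rank := by
  refine ⟨fun b => ?_, ?_, ?_⟩
  · simp only [bracket, hP1P1, fP1P1, gP1P1, mW', AP1P1, Matrix.mulVec, dotProduct,
      Fin.sum_univ_succ, Fin.sum_univ_zero]
    -- `ring` treats the scalar `C 2` coming from the matrix entries as an atom.
    have h2 : (C 2 : MvPolynomial (Fin 2) ℂ) = 2 := map_ofNat C 2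
    simp [Derivation.leibniz, Derivation.leibniz_pow, pderiv_X, h2]
    ring
  -- The two dimension counts are rank–nullity, the rank being the dimension of the range.
  · have h := LinearMap.finrank_range_add_finrank_ker (AP1P1 a).mulVecLin
    rw [Module.finrank_fin_fun] at h
    rw [Matrix.rank]
    omega
  · have h := Submodule.finrank_quotient_add_finrank (LinearMap.range (AP1P1 a).mulVecLin)
    rw [Module.finrank_fin_fun] at h
    rw [Matrix.rank]
    omega
end

section
/- Let h = 1 ∈ W (the constant polynomial), so that d_h : V → W is the linear map d_h(f,g) = ∂f/∂x + ∂g/∂w. Then the kernel of d_h has dimension 5 and the quotient W / image(d_h) has dimension 7. (For the Poisson structure π = ∂/∂x ∧ ∂/∂w on ℂP², this gives dim H¹_π(ℂP²) = 5 and dim H²_π(ℂP²) = 7.) -/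
/-!
For `h = 1` the map `d_h` is the divergence, which takes the vector field with coefficients
`b₁,…,b₈` to `(b₂ + b₆) + 3 b₇ x + 3 b₈ w` (`dCP2_one_apply`). As `3` is invertible in `ℂ`, its
image is the span of `1, x, w` (`range_dCP2_one`). The ten monomials spanning `W` are linearly
independent (`linearIndependent_cubicMonomials`), so the image has dimension `3` and `W` has
dimension `10`. Rank–nullity gives a kernel of dimension `8 - 3 = 5`, and the quotient has
dimension `10 - 3 = 7`.
-/

open MvPolynomial

/-- The linear map `d_h : V → W`, `d_h(f,g) = h·∂f/∂x − f·∂h/∂x + h·∂g/∂w − g·∂h/∂w`,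
where `V ≅ ℂ⁸` is parametrized by the coefficients `b₁,…,b₈` of `(f,g)`. -/
noncomputable def dCP2 (h : MvPolynomial (Fin 2) ℂ) :
    (Fin 8 → ℂ) →ₗ[ℂ] MvPolynomial (Fin 2) ℂ :=
  ∑ j : Fin 8, (LinearMap.proj j : (Fin 8 → ℂ) →ₗ[ℂ] ℂ).smulRight
    (bracket h (fCP2 (Pi.single j 1)) (gCP2 (Pi.single j 1)))

/-- The 10-dimensional space `W` of polynomials of total degree ≤ 3, spanned by the
monomials `1, x, w, x², xw, w², x³, x²w, xw², w³`. -/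
noncomputable def Wspace : Submodule ℂ (MvPolynomial (Fin 2) ℂ) :=
  Submodule.span ℂ (Set.range
    (![1, X 0, X 1, X 0 ^ 2, X 0 * X 1, X 1 ^ 2, X 0 ^ 3, X 0 ^ 2 * X 1, X 0 * X 1 ^ 2,
       X 1 ^ 3] : Fin 10 → MvPolynomial (Fin 2) ℂ))

/-- The monomials of degree at most `3` in `x, w`, in the order used to define `Wspace`; the
first three are `1, x, w`. -/
noncomputable def cubicMonomials : Fin 10 → MvPolynomial (Fin 2) ℂ :=
  ![1, X 0, X 1, X 0 ^ 2, X 0 * X 1, X 1 ^ 2, X 0 ^ 3, X 0 ^ 2 * X 1, X 0 * X 1 ^ 2, X 1 ^ 3]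

/-- The exponents `(i, j)` of the monomials `x ^ i * w ^ j` listed by `cubicMonomials`. -/
def cubicExponents : Fin 10 → Fin 2 → ℕ :=
  ![![0, 0], ![1, 0], ![0, 1], ![2, 0], ![1, 1], ![0, 2], ![3, 0], ![2, 1], ![1, 2], ![0, 3]]

lemma linearIndependent_cubicMonomials : LinearIndependent ℂ cubicMonomials := by
  have hinj : Function.Injective cubicExponents := by decide
  have hli := (basisMonomials (Fin 2) ℂ).linearIndependent.comp _
    (Finsupp.equivFunOnFinite.symm.injective.comp hinj)
  suffices h : cubicMonomials = basisMonomials (Fin 2) ℂ ∘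
      Finsupp.equivFunOnFinite.symm ∘ cubicExponents by
    rw [h]
    exact hli
  funext i
  simp only [Function.comp_apply, coe_basisMonomials, monomial_eq,
    Finsupp.prod_fintype _ _ (fun _ => pow_zero _), Fin.prod_univ_two,
    Finsupp.equivFunOnFinite_symm_apply_apply]
  fin_cases i <;> simp [cubicMonomials, cubicExponents]

lemma dCP2_one_eq_divergence (b : Fin 8 → ℂ) :
    dCP2 1 b = pderiv 0 (fCP2 b) + pderiv 1 (gCP2 b) := by
  simp [dCP2, bracket, fCP2, gCP2, Fin.sum_univ_eight, Pi.single_apply, pderiv_X, smul_eq_C_mul]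
  ring

lemma dCP2_one_apply (b : Fin 8 → ℂ) :
    dCP2 1 b = C (b 1 + b 5) * 1 + C (3 * b 6) * X 0 + C (3 * b 7) * X 1 := by
  have h3 : (C 3 : MvPolynomial (Fin 2) ℂ) = 3 := map_ofNat C 3
  rw [dCP2_one_eq_divergence]
  simp [fCP2, gCP2, pderiv_X, h3]
  ring

lemma range_dCP2_one : LinearMap.range (dCP2 1) =
    Submodule.span ℂ (Set.range (cubicMonomials ∘ (Fin.castLE (by decide) : Fin 3 → Fin 10))) := by
  ext p
  rw [LinearMap.mem_range, Submodule.mem_span_range_iff_exists_fun]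
  constructor
  · rintro ⟨b, rfl⟩
    refine ⟨![b 1 + b 5, 3 * b 6, 3 * b 7], ?_⟩
    rw [dCP2_one_apply]
    simp [Fin.sum_univ_three, cubicMonomials, smul_eq_C_mul]
  · rintro ⟨c, rfl⟩
    -- `c₀ x ∂/∂x` has divergence `c₀`; the quadratic fields `x (x ∂/∂x + w ∂/∂w)` and
    -- `w (x ∂/∂x + w ∂/∂w)` have divergence `3 x` and `3 w`.
    refine ⟨![0, c 0, 0, 0, 0, 0, c 1 / 3, c 2 / 3], ?_⟩
    rw [dCP2_one_apply]
    have h3 (z : ℂ) : 3 * (z / 3) = z := by ring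
    simp [Fin.sum_univ_three, cubicMonomials, smul_eq_C_mul, -map_mul, h3]

lemma finrank_range_dCP2_one : Module.finrank ℂ (LinearMap.range (dCP2 1)) = 3 := by
  rw [range_dCP2_one, finrank_span_eq_card
    (linearIndependent_cubicMonomials.comp _ (Fin.castLE_injective _)), Fintype.card_fin]

lemma finrank_Wspace : Module.finrank ℂ Wspace = 10 :=
  (finrank_span_eq_card linearIndependent_cubicMonomials).trans (Fintype.card_fin 10)

lemma range_dCP2_one_le_Wspace : LinearMap.range (dCP2 1) ≤ Wspace := by
  rw [range_dCP2_one]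
  exact Submodule.span_mono (Set.range_comp_subset_range _ cubicMonomials)

/-- For `h = 1 ∈ W`, so that `d_h(f,g) = ∂f/∂x + ∂g/∂w`, the kernel of `d_h : V → W` has
dimension 5 and `W/im d_h` has dimension 7.  For `π = ∂/∂x ∧ ∂/∂w` on ℂP² this gives
`dim H¹_π(ℂP²) = 5` and `dim H²_π(ℂP²) = 7`. -/
theorem statement12 :
    (∀ b : Fin 8 → ℂ, dCP2 1 b = pderiv 0 (fCP2 b) + pderiv 1 (gCP2 b)) ∧
    Module.finrank ℂ (LinearMap.ker (dCP2 1)) = 5 ∧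
    Module.finrank ℂ
      (↥Wspace ⧸ (LinearMap.range (dCP2 1)).comap Wspace.subtype) = 7 := by
  refine ⟨dCP2_one_eq_divergence, ?_, ?_⟩
  · have h := (dCP2 1).finrank_range_add_finrank_ker
    rw [finrank_range_dCP2_one, Module.finrank_fin_fun] at h
    omega
  · have : FiniteDimensional ℂ Wspace := Module.finite_of_finrank_eq_succ finrank_Wspace
    have h := Submodule.finrank_quotient_add_finrank
      ((LinearMap.range (dCP2 1)).comap Wspace.subtype)
    rw [(Submodule.comapSubtypeEquivOfLe range_dCP2_one_le_Wspace).finrank_eq,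
      finrank_range_dCP2_one, finrank_Wspace] at h
    omega
end

section
/- Let h = x·w ∈ W, so that d_h : V → W is the linear map d_h(f,g) = xw·(∂f/∂x) − w·f + xw·(∂g/∂w) − x·g. Then the kernel of d_h has dimension 2 and the quotient W / image(d_h) has dimension 4. (For the Poisson structure π = xw ∂/∂x ∧ ∂/∂w on ℂP², this gives dim H¹_π(ℂP²) = 2 and dim H²_π(ℂP²) = 4.) -/
/-!
On coefficients, `d_{xw}` kills `b₂` (the coefficient of `x` in `f`) and `b₆` (the coefficient
of `w` in `g`), and up to sign it sends the six other coefficients to the coefficients of the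
distinct monomials `x, w, x², w², x²w, xw²`. Hence its range is the span of these six monomials
(`range_dCP2`). Since monomials are linearly independent, the rank is `6`, so rank-nullity gives
a kernel of dimension `8 - 6 = 2`, and the cokernel in the `10`-dimensional space `W` has
dimension `10 - 6 = 4`.
-/

open MvPolynomial

/-- The spanning family of `Wspace`. -/
noncomputable def monW : Fin 10 → MvPolynomial (Fin 2) ℂ :=
  ![1, X 0, X 1, X 0 ^ 2, X 0 * X 1, X 1 ^ 2, X 0 ^ 3, X 0 ^ 2 * X 1, X 0 * X 1 ^ 2, X 1 ^ 3]

/-- The exponents `(i, j)` of the monomials `xⁱwʲ` of `monW`, in the same order. -/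
def expW : Fin 10 → Fin 2 → ℕ :=
  ![![0, 0], ![1, 0], ![0, 1], ![2, 0], ![1, 1], ![0, 2], ![3, 0], ![2, 1], ![1, 2], ![0, 3]]

/-- The positions in `monW` of the monomials `x, w, x², w², x²w, xw²` spanning the range. -/
def idxRange : Fin 6 → Fin 10 := ![1, 2, 3, 5, 7, 8]

lemma monW_eq_monomial (i : Fin 10) :
    monW i = monomial (Finsupp.equivFunOnFinite.symm (expW i)) (1 : ℂ) := by
  rw [monomial_eq, Finsupp.prod_fintype _ _ (by simp)]
  fin_cases i <;> simp [monW, expW, Fin.prod_univ_two]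

lemma linearIndependent_monW : LinearIndependent ℂ monW := by
  have hinj : Function.Injective expW := by decide
  have h := (basisMonomials (Fin 2) ℂ).linearIndependent.comp
    (fun i => Finsupp.equivFunOnFinite.symm (expW i))
    (Finsupp.equivFunOnFinite.symm.injective.comp hinj)
  have hfun : monW = basisMonomials (Fin 2) ℂ ∘
      fun i => Finsupp.equivFunOnFinite.symm (expW i) := by
    funext i
    simp [monW_eq_monomial]
  rw [hfun]
  exact h

lemma dCP2_apply (h : MvPolynomial (Fin 2) ℂ) (b : Fin 8 → ℂ) :
    dCP2 h b = bracket h (fCP2 b) (gCP2 b) := by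
  simp [dCP2, Fin.sum_univ_eight, bracket, fCP2, gCP2, Pi.single_apply, Derivation.leibniz,
    Derivation.leibniz_pow, pderiv_X, smul_eq_C_mul]
  ring

lemma dCP2_xw_apply (b : Fin 8 → ℂ) :
    dCP2 (X 0 * X 1) b = -b 3 • X 0 + -b 0 • X 1 + -b 4 • X 0 ^ 2 + -b 2 • X 1 ^ 2
      + b 6 • (X 0 ^ 2 * X 1) + b 7 • (X 0 * X 1 ^ 2) := by
  rw [dCP2_apply]
  simp [bracket, fCP2, gCP2, Derivation.leibniz,
    Derivation.leibniz_pow, pderiv_X, smul_eq_C_mul]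
  ring

lemma range_dCP2 :
    LinearMap.range (dCP2 (X 0 * X 1)) = Submodule.span ℂ (Set.range (monW ∘ idxRange)) := by
  apply le_antisymm
  · rintro _ ⟨b, rfl⟩
    have hm (i : Fin 6) : monW (idxRange i) ∈ Submodule.span ℂ (Set.range (monW ∘ idxRange)) :=
      Submodule.subset_span ⟨i, rfl⟩
    rw [dCP2_xw_apply]
    exact add_mem (add_mem (add_mem (add_mem (add_mem
      (Submodule.smul_mem _ _ (hm 0)) (Submodule.smul_mem _ _ (hm 1)))
      (Submodule.smul_mem _ _ (hm 2))) (Submodule.smul_mem _ _ (hm 3)))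
      (Submodule.smul_mem _ _ (hm 4))) (Submodule.smul_mem _ _ (hm 5))
  · rw [Submodule.span_le]
    rintro _ ⟨i, rfl⟩
    -- Up to sign, each of the six monomials is the image of a basis vector of `V`.
    refine ⟨(![-Pi.single 3 1, -Pi.single 0 1, -Pi.single 4 1, -Pi.single 2 1, Pi.single 6 1,
      Pi.single 7 1] : Fin 6 → Fin 8 → ℂ) i, ?_⟩
    rw [dCP2_xw_apply]
    fin_cases i <;> simp [monW, idxRange]

lemma finrank_range_dCP2 : Module.finrank ℂ (LinearMap.range (dCP2 (X 0 * X 1))) = 6 := by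
  rw [range_dCP2, finrank_span_eq_card (linearIndependent_monW.comp idxRange (by decide)),
    Fintype.card_fin]

lemma range_dCP2_le : LinearMap.range (dCP2 (X 0 * X 1)) ≤ Wspace := by
  rw [range_dCP2]
  exact Submodule.span_mono (Set.range_comp_subset_range idxRange monW)

/-- For `h = xw ∈ W`, so that `d_h(f,g) = xw·∂f/∂x − w·f + xw·∂g/∂w − x·g`, the kernel of
`d_h : V → W` has dimension 2 and `W/im d_h` has dimension 4.  For `π = xw ∂/∂x ∧ ∂/∂w`
on ℂP² this gives `dim H¹_π(ℂP²) = 2` and `dim H²_π(ℂP²) = 4`. -/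
theorem statement13 :
    (∀ b : Fin 8 → ℂ, dCP2 (X 0 * X 1) b
      = X 0 * X 1 * pderiv 0 (fCP2 b) - X 1 * fCP2 b
        + X 0 * X 1 * pderiv 1 (gCP2 b) - X 0 * gCP2 b) ∧
    Module.finrank ℂ (LinearMap.ker (dCP2 (X 0 * X 1))) = 2 ∧
    Module.finrank ℂ
      (↥Wspace ⧸ (LinearMap.range (dCP2 (X 0 * X 1))).comap Wspace.subtype) = 4 := by
  refine ⟨fun b => ?_, ?_, ?_⟩
  · rw [dCP2_apply]
    simp [bracket, pderiv_X]
    ring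
  · have h := LinearMap.finrank_range_add_finrank_ker (dCP2 (X 0 * X 1))
    rw [finrank_range_dCP2, Module.finrank_fin_fun] at h
    omega
  · have : FiniteDimensional ℂ Wspace := .of_finrank_pos (by rw [finrank_Wspace]; norm_num)
    have h := Submodule.finrank_quotient_add_finrank
      ((LinearMap.range (dCP2 (X 0 * X 1))).comap Wspace.subtype)
    rw [(Submodule.comapSubtypeEquivOfLe range_dCP2_le).finrank_eq, finrank_range_dCP2,
      finrank_Wspace] at h
    omega
end

section
/- Let h = x ∈ W', so that d_h : V' → W' is the linear map d_h(f,g) = x·(∂f/∂x) − f + x·(∂g/∂w). Then the kernel of d_h has dimension 2 and the quotient W' / image(d_h) has dimension 5. (For the Poisson structure π = x ∂/∂x ∧ ∂/∂w on ℂP¹ × ℂP¹, this gives dim H¹_π = 2 and dim H²_π = 5.) -/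
/-!
Writing out the bracket gives `d_x(b) = -b₁ + b₅ x + b₃ x² + 2 b₆ x w` (`dP1P1_X_apply`), so the
image of `d_x` is the span of the four monomials `1, x, x², x w`. Distinct monomials are linearly
independent, hence the image has dimension 4 and the spanning family of `W'` is a basis, so
`dim W' = 9`. Rank–nullity gives `dim ker = 6 - 4 = 2`, and the quotient has dimension `9 - 4 = 5`.
-/

open MvPolynomial

/-- The linear map `d_h : V' → W'`, `d_h(f,g) = h·∂f/∂x − f·∂h/∂x + h·∂g/∂w − g·∂h/∂w`,
where `V' ≅ ℂ⁶` is parametrized by the coefficients `b₁,…,b₆` of `(f,g)`. -/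
noncomputable def dP1P1 (h : MvPolynomial (Fin 2) ℂ) :
    (Fin 6 → ℂ) →ₗ[ℂ] MvPolynomial (Fin 2) ℂ :=
  ∑ j : Fin 6, (LinearMap.proj j : (Fin 6 → ℂ) →ₗ[ℂ] ℂ).smulRight
    (bracket h (fP1P1 (Pi.single j 1)) (gP1P1 (Pi.single j 1)))

/-- The 9-dimensional space `W'` of polynomials of degree ≤ 2 in `x` and ≤ 2 in `w`,
spanned by the monomials `1, x, x², w, xw, x²w, w², xw², x²w²`. -/
noncomputable def W'space : Submodule ℂ (MvPolynomial (Fin 2) ℂ) :=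
  Submodule.span ℂ (Set.range
    (![1, X 0, X 0 ^ 2, X 1, X 0 * X 1, X 0 ^ 2 * X 1, X 1 ^ 2, X 0 * X 1 ^ 2,
       X 0 ^ 2 * X 1 ^ 2] : Fin 9 → MvPolynomial (Fin 2) ℂ))

/-- The spanning monomials of `W'`, in the order used in `W'space`. -/
noncomputable def monoP1P1 : Fin 9 → MvPolynomial (Fin 2) ℂ :=
  ![1, X 0, X 0 ^ 2, X 1, X 0 * X 1, X 0 ^ 2 * X 1, X 1 ^ 2, X 0 * X 1 ^ 2, X 0 ^ 2 * X 1 ^ 2]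

/-- The `i`-th spanning monomial is `x ^ (i % 3) * w ^ (i / 3)`. -/
lemma monoP1P1_eq (i : Fin 9) :
    monoP1P1 i = basisMonomials (Fin 2) ℂ
      (Finsupp.single 0 (i.val % 3) + Finsupp.single 1 (i.val / 3)) := by
  have h (a b : ℕ) : (monomial (Finsupp.single 0 a + Finsupp.single 1 b) (1 : ℂ) :
      MvPolynomial (Fin 2) ℂ) = X 0 ^ a * X 1 ^ b := by
    rw [X_pow_eq_monomial, X_pow_eq_monomial, monomial_mul, one_mul]
  rw [coe_basisMonomials]
  dsimp only
  rw [h]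
  fin_cases i <;> simp [monoP1P1]

lemma linearIndependent_monoP1P1 : LinearIndependent ℂ monoP1P1 := by
  have hinj : Function.Injective fun i : Fin 9 =>
      (Finsupp.single 0 (i.val % 3) + Finsupp.single 1 (i.val / 3) : Fin 2 →₀ ℕ) := by
    intro i j hij
    have h0 := DFunLike.congr_fun hij 0
    have h1 := DFunLike.congr_fun hij 1
    simp at h0 h1
    ext
    omega
  rw [show monoP1P1 = _ from funext monoP1P1_eq]
  exact (basisMonomials (Fin 2) ℂ).linearIndependent.comp _ hinj

lemma finrank_W'space : Module.finrank ℂ W'space = 9 := by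
  exact (finrank_span_eq_card linearIndependent_monoP1P1).trans (Fintype.card_fin 9)

lemma dP1P1_X_apply (b : Fin 6 → ℂ) :
    dP1P1 (X 0) b = -C (b 0) + C (b 4) * X 0 + C (b 2) * X 0 ^ 2
      + C (2 * b 5) * (X 0 * X 1) := by
  have h2 : (C 2 : MvPolynomial (Fin 2) ℂ) = 2 := map_ofNat C 2
  simp [dP1P1, bracket, fP1P1, gP1P1, Fin.sum_univ_six, Pi.single_apply, smul_eq_C_mul,
    pderiv_X, h2]
  ring

lemma dP1P1_X_eq (b : Fin 6 → ℂ) :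
    dP1P1 (X 0) b
      = X 0 * pderiv 0 (fP1P1 b) - fP1P1 b + X 0 * pderiv 1 (gP1P1 b) := by
  have h2 : (C 2 : MvPolynomial (Fin 2) ℂ) = 2 := map_ofNat C 2
  rw [dP1P1_X_apply]
  simp [fP1P1, gP1P1, pderiv_X, h2]
  ring

lemma range_dP1P1_X :
    LinearMap.range (dP1P1 (X 0))
      = Submodule.span ℂ (Set.range (monoP1P1 ∘ ![0, 1, 2, 4])) := by
  apply le_antisymm
  · rintro _ ⟨b, rfl⟩
    rw [Submodule.mem_span_range_iff_exists_fun]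
    refine ⟨![-b 0, b 4, b 2, 2 * b 5], ?_⟩
    rw [dP1P1_X_apply]
    simp [Fin.sum_univ_succ, monoP1P1, smul_eq_C_mul]
    ring
  · rw [Submodule.span_le]
    rintro _ ⟨i, rfl⟩
    -- preimages of `1, x, x², x w` under `d_x`
    refine ⟨![Pi.single 0 (-1), Pi.single 4 1, Pi.single 2 1, Pi.single 5 (1 / 2)] i, ?_⟩
    rw [dP1P1_X_apply]
    fin_cases i <;> simp [monoP1P1, Fin.ext_iff]

lemma finrank_range_dP1P1_X : Module.finrank ℂ (LinearMap.range (dP1P1 (X 0))) = 4 := by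
  rw [range_dP1P1_X]
  simpa using finrank_span_eq_card
    (linearIndependent_monoP1P1.comp (![0, 1, 2, 4] : Fin 4 → Fin 9) (by decide))

lemma range_dP1P1_X_le : LinearMap.range (dP1P1 (X 0)) ≤ W'space := by
  rw [range_dP1P1_X]
  exact Submodule.span_mono (Set.range_comp_subset_range _ _)

/-- For `h = x ∈ W'`, so that `d_h(f,g) = x·∂f/∂x − f + x·∂g/∂w`, the kernel of
`d_h : V' → W'` has dimension 2 and `W'/im d_h` has dimension 5.  For
`π = x ∂/∂x ∧ ∂/∂w` on ℂP¹ × ℂP¹ this gives `dim H¹_π = 2` and `dim H²_π = 5`. -/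
theorem statement15 :
    (∀ b : Fin 6 → ℂ, dP1P1 (X 0) b
      = X 0 * pderiv 0 (fP1P1 b) - fP1P1 b + X 0 * pderiv 1 (gP1P1 b)) ∧
    Module.finrank ℂ (LinearMap.ker (dP1P1 (X 0))) = 2 ∧
    Module.finrank ℂ
      (↥W'space ⧸ (LinearMap.range (dP1P1 (X 0))).comap W'space.subtype) = 5 := by
  refine ⟨dP1P1_X_eq, ?_, ?_⟩
  · have h := (dP1P1 (X 0)).finrank_range_add_finrank_ker
    rw [finrank_range_dP1P1_X, Module.finrank_fin_fun] at h
    omega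
  · have : FiniteDimensional ℂ W'space :=
      FiniteDimensional.span_of_finite ℂ (Set.finite_range _)
    have h := Submodule.finrank_quotient_add_finrank
      ((LinearMap.range (dP1P1 (X 0))).comap W'space.subtype)
    rw [(Submodule.comapSubtypeEquivOfLe range_dP1P1_X_le).finrank_eq,
      finrank_range_dP1P1_X, finrank_W'space] at h
    omega
end

section
/- Let V₂ be the 4-dimensional ℂ-vector space of pairs (f,g) with f = b₂x + b₃w − b₂x² + b₈xw, g = b₆w − b₂xw + b₈w² (b₂,b₃,b₆,b₈ ∈ ℂ), and let W₂ be the 8-dimensional ℂ-vector space of polynomials h = a₂x + a₃w + a₄x² + a₅xw + a₆w² − (a₂+a₄)x³ + a₈x²w + a₉xw² + a₁₀w³ (a₂,a₃,a₄,a₅,a₆,a₈,a₉,a₁₀ ∈ ℂ). Fix h ∈ W₂ and let d_h : V₂ → W₂ be d_h(f,g) = h·∂f/∂x − f·∂h/∂x + h·∂g/∂w − g·∂h/∂w (which indeed lands in W₂). With respect to the basis of V₂ indexed by (b₂,b₃,b₆,b₈) and the coordinates (a₂,a₃,a₄,a₅,a₆,a₈,a₉,a₁₀) on W₂, the matrix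 of d_h is the 8×4 matrix A with rows: (0, 0, a₂, 0); (a₃, −a₂, 0, 0); (−2a₂−a₄, 0, a₄, 0); (−2a₃, −2a₄, 0, 2a₂); (a₆, −a₅, −a₆, 2a₃); (−a₈−a₅, 3a₂+3a₄, 0, a₄); (−a₆, −2a₈, −a₉, a₅); (a₁₀, −a₉, −2a₁₀, a₆). Consequently the kernel of d_h has dimension 4 − rank(A) and the quotient W₂ / image(d_h) has dimension 8 − rank(A). (For the Poisson surface B₂, the blow-up of ℂP² at two points, these are dim H¹_π(B₂) and dim H²_π(B₂).) -/
/-!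
The bracket identity is a comparison of polynomials: once the partial derivatives are computed and
the matrix-vector product is written out, both sides agree in the commutative polynomial ring. The
two dimension formulas are rank-nullity for the linear map of the matrix, for the kernel and for
the cokernel respectively.
-/

open MvPolynomial

/-- The parametrization of the 8-dimensional space `W₂` by the coordinates
`(a₂,a₃,a₄,a₅,a₆,a₈,a₉,a₁₀)` (indexed by `Fin 8`):
`h = a₂x + a₃w + a₄x² + a₅xw + a₆w² − (a₂+a₄)x³ + a₈x²w + a₉xw² + a₁₀w³`. -/
noncomputable def hB2 (a : Fin 8 → ℂ) : MvPolynomial (Fin 2) ℂ :=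
  C (a 0) * X 0 + C (a 1) * X 1 + C (a 2) * X 0 ^ 2 + C (a 3) * (X 0 * X 1)
    + C (a 4) * X 1 ^ 2 - C (a 0 + a 2) * X 0 ^ 3 + C (a 5) * (X 0 ^ 2 * X 1)
    + C (a 6) * (X 0 * X 1 ^ 2) + C (a 7) * X 1 ^ 3

/-- `f = b₂x + b₃w − b₂x² + b₈xw`, the coefficients `(b₂,b₃,b₆,b₈)` being indexed by
`Fin 4`. -/
noncomputable def fB2 (b : Fin 4 → ℂ) : MvPolynomial (Fin 2) ℂ :=
  C (b 0) * X 0 + C (b 1) * X 1 - C (b 0) * X 0 ^ 2 + C (b 3) * (X 0 * X 1)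

/-- `g = b₆w − b₂xw + b₈w²`, the coefficients `(b₂,b₃,b₆,b₈)` being indexed by
`Fin 4`. -/
noncomputable def gB2 (b : Fin 4 → ℂ) : MvPolynomial (Fin 2) ℂ :=
  C (b 2) * X 1 - C (b 0) * (X 0 * X 1) + C (b 3) * X 1 ^ 2

/-- The 8 × 4 matrix `A_π` for the blow-up `B₂` of ℂP² at two points. -/
def AB2 (a : Fin 8 → ℂ) : Matrix (Fin 8) (Fin 4) ℂ :=
  !![0, 0, a 0, 0;
     a 1, -a 0, 0, 0;
     -2*a 0 - a 2, 0, a 2, 0;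
     -2*a 1, -2*a 2, 0, 2*a 0;
     a 4, -a 3, -a 4, 2*a 1;
     -a 5 - a 3, 3*a 0 + 3*a 2, 0, a 2;
     -a 4, -2*a 5, -a 6, a 3;
     a 7, -a 6, -2*a 7, a 4]

/-- With respect to the basis of `V₂` indexed by `(b₂,b₃,b₆,b₈)` and the coordinates
`(a₂,a₃,a₄,a₅,a₆,a₈,a₉,a₁₀)` on `W₂`, the matrix of `d_h : V₂ → W₂` is the 8 × 4 matrix
`A = AB2 a` (in particular `d_h` lands in `W₂`); consequently `ker d_h` has dimension
`4 − rank A` and `W₂/im d_h` has dimension `8 − rank A`.  For the Poisson surface `B₂`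
these are `dim H¹_π(B₂)` and `dim H²_π(B₂)`. -/
theorem statement17 (a : Fin 8 → ℂ) :
    (∀ b : Fin 4 → ℂ, bracket (hB2 a) (fB2 b) (gB2 b) = hB2 ((AB2 a).mulVec b)) ∧
    Module.finrank ℂ (LinearMap.ker (AB2 a).mulVecLin) = 4 - (AB2 a).rank ∧
    Module.finrank ℂ ((Fin 8 → ℂ) ⧸ LinearMap.range (AB2 a).mulVecLin)
      = 8 - (AB2 a).rank := by
  refine ⟨fun b => ?_, ?_, ?_⟩
  · have d01 : pderiv (0 : Fin 2) (X 1 : MvPolynomial (Fin 2) ℂ) = 0 :=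
      pderiv_X_of_ne (by decide)
    have d10 : pderiv (1 : Fin 2) (X 0 : MvPolynomial (Fin 2) ℂ) = 0 :=
      pderiv_X_of_ne (by decide)
    have c2 : (C 2 : MvPolynomial (Fin 2) ℂ) = 2 := map_ofNat C 2
    have c3 : (C 3 : MvPolynomial (Fin 2) ℂ) = 3 := map_ofNat C 3
    simp only [bracket, hB2, fB2, gB2, AB2, Matrix.mulVec, dotProduct, Fin.sum_univ_four,
      map_add, map_sub, Derivation.leibniz, Derivation.leibniz_pow, pderiv_C, pderiv_X_self,
      d01, d10, smul_eq_mul, nsmul_eq_mul]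
    simp [c2, c3]
    ring
  · have h := (AB2 a).mulVecLin.finrank_range_add_finrank_ker
    rw [Module.finrank_fin_fun] at h
    rw [Matrix.rank]
    omega
  · have h := (LinearMap.range (AB2 a).mulVecLin).finrank_quotient_add_finrank
    rw [Module.finrank_fin_fun] at h
    rw [Matrix.rank]
    omega
end

section
/- Let V₃ be the 2-dimensional ℂ-vector space of pairs (f,g) with f = b₂x − b₂x² − b₆xw, g = b₆w − b₂xw − b₆w² (b₂,b₆ ∈ ℂ), and let W₃ be the 7-dimensional ℂ-vector space of polynomials h = a₂x + a₃w + a₄x² + a₅xw + a₆w² − (a₂+a₄)x³ + a₈x²w + a₉xw² − (a₃+a₆)w³ (a₂,a₃,a₄,a₅,a₆,a₈,a₉ ∈ ℂ). Fix h ∈ W₃ and let d_h : V₃ → W₃ be d_h(f,g) = h·∂f/∂x − f·∂h/∂x + h·∂g/∂w − g·∂h/∂w (which indeed lands in W₃). With respect to the basis of V₃ indexed by (b₂,b₆) and the coordinates (a₂,a₃,a₄,a₅,a₆,a₈,a₉) on W₃, the matrix of d_h is the 7×2 matrix A with rows: (0, a₂); (a₃, 0); (−2a₂−a₄, a₄);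 (−2a₃, −2a₂); (a₆, −2a₃−a₆); (−a₅−a₈, −a₄); (−a₆, −a₅−a₉). Consequently the kernel of d_h has dimension 2 − rank(A) and the quotient W₃ / image(d_h) has dimension 7 − rank(A). (For the Poisson surface B₃, the blow-up of ℂP² at three points, these are dim H¹_π(B₃) and dim H²_π(B₃).) -/
open MvPolynomial

/-- The parametrization of the 7-dimensional space `W₃` by the coordinates
`(a₂,a₃,a₄,a₅,a₆,a₈,a₉)` (indexed by `Fin 7`):
`h = a₂x + a₃w + a₄x² + a₅xw + a₆w² − (a₂+a₄)x³ + a₈x²w + a₉xw² − (a₃+a₆)w³`. -/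
noncomputable def hB3 (a : Fin 7 → ℂ) : MvPolynomial (Fin 2) ℂ :=
  C (a 0) * X 0 + C (a 1) * X 1 + C (a 2) * X 0 ^ 2 + C (a 3) * (X 0 * X 1)
    + C (a 4) * X 1 ^ 2 - C (a 0 + a 2) * X 0 ^ 3 + C (a 5) * (X 0 ^ 2 * X 1)
    + C (a 6) * (X 0 * X 1 ^ 2) - C (a 1 + a 4) * X 1 ^ 3

/-- `f = b₂x − b₂x² − b₆xw`, the coefficients `(b₂,b₆)` being indexed by `Fin 2`. -/
noncomputable def fB3 (b : Fin 2 → ℂ) : MvPolynomial (Fin 2) ℂ :=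
  C (b 0) * X 0 - C (b 0) * X 0 ^ 2 - C (b 1) * (X 0 * X 1)

/-- `g = b₆w − b₂xw − b₆w²`, the coefficients `(b₂,b₆)` being indexed by `Fin 2`. -/
noncomputable def gB3 (b : Fin 2 → ℂ) : MvPolynomial (Fin 2) ℂ :=
  C (b 1) * X 1 - C (b 0) * (X 0 * X 1) - C (b 1) * X 1 ^ 2

/-- The 7 × 2 matrix `A_π` for the blow-up `B₃` of ℂP² at three points. -/
def AB3 (a : Fin 7 → ℂ) : Matrix (Fin 7) (Fin 2) ℂ :=
  !![0, a 0;
     a 1, 0;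
     -2*a 0 - a 2, a 2;
     -2*a 1, -2*a 0;
     a 4, -2*a 1 - a 4;
     -a 3 - a 5, -a 2;
     -a 4, -a 3 - a 6]

/-- With respect to the basis of `V₃` indexed by `(b₂,b₆)` and the coordinates
`(a₂,a₃,a₄,a₅,a₆,a₈,a₉)` on `W₃`, the matrix of `d_h : V₃ → W₃` is the 7 × 2 matrix
`A = AB3 a` (in particular `d_h` lands in `W₃`); consequently `ker d_h` has dimension
`2 − rank A` and `W₃/im d_h` has dimension `7 − rank A`.  For the Poisson surface `B₃`
these are `dim H¹_π(B₃)` and `dim H²_π(B₃)`. -/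
theorem statement18 (a : Fin 7 → ℂ) :
    (∀ b : Fin 2 → ℂ, bracket (hB3 a) (fB3 b) (gB3 b) = hB3 ((AB3 a).mulVec b)) ∧
    Module.finrank ℂ (LinearMap.ker (AB3 a).mulVecLin) = 2 - (AB3 a).rank ∧
    Module.finrank ℂ ((Fin 7 → ℂ) ⧸ LinearMap.range (AB3 a).mulVecLin)
      = 7 - (AB3 a).rank := by
  -- The dimension counts are rank-nullity on `ℂ²` and the quotient formula in `ℂ⁷`; in this form
  -- neither subtraction of naturals truncates.
  have hn := (AB3 a).mulVecLin.finrank_range_add_finrank_ker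
  have hq := (LinearMap.range (AB3 a).mulVecLin).finrank_quotient_add_finrank
  simp only [Module.finrank_fin_fun] at hn hq
  refine ⟨fun b => ?_, ?_, ?_⟩
  -- Both sides are explicit polynomials in `x`, `w`; expanding the derivatives leaves a ring identity.
  · simp [bracket, hB3, fB3, gB3, AB3, Matrix.mulVec, dotProduct, Fin.sum_univ_two,
      pderiv_X, Derivation.leibniz_pow]
    -- `ring` treats `C 2` as an atom, so the constants of `AB3` are turned into numerals.
    have h2 : (C (2 : ℂ) : MvPolynomial (Fin 2) ℂ) = 2 := map_ofNat C 2
    simp only [h2]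
    ring
  · unfold Matrix.rank
    omega
  · unfold Matrix.rank
    omega
end
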